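/- arXiv:2307.06438 — 2 statements merged into one kernel-verified Lean document; each statement's English description precedes it below -/
import Mathlib

section
/- The operator Ω_Φ on the 70-dimensional space of 4-forms on ℝ^8 is diagonalizable with eigenvalues −24, −12, 4, 0 whose eigenspaces Λ⁴₁, Λ⁴₇, Λ⁴₂₇, Λ⁴₃₅ have dimensions 1, 7, 27, 35 respectively; the space of self-dual 4-forms (those with σ_{ijkl} = (1/24) ε_{ijklabcd} σ_{abcd}) equals Λ⁴₁ ⊕ Λ⁴₇ ⊕ Λ⁴₂₇, and the space of anti-self-dual 4-forms equals Λ⁴₃₅. In particular Ω_Φ satisfies (Ω_Φ + 24)(Ω_Φ + 12)(Ω_Φ − 4)Ω_Φ = 0. -/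
/-!
We work in ℝ⁸ with the standard basis `e₀, …, e₇`.  A `k`-form is a totally antisymmetric
map `(Fin 8)^k → ℝ`; repeated indices are summed over `Fin 8` and `kd` is the Kronecker
delta.  `Phi` is the fundamental 4-form of the standard `Spin(7)`-structure on ℝ⁸,
`Φ = -e₀₁₂₇ + e₀₂₃₆ - e₀₃₄₇ - e₀₅₆₇ + e₀₁₄₆ + e₀₂₄₅ - e₀₁₃₅
     - e₃₄₅₆ - e₁₄₅₇ - e₁₂₅₆ - e₁₂₃₄ - e₂₃₅₇ - e₁₃₆₇ + e₂₄₆₇`.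
-/

noncomputable section

/-- Kronecker delta on `Fin 8`. -/
def kd (a b : Fin 8) : ℝ := if a = b then 1 else 0

/-- Component at the indices `(i,j,k,l)` of the wedge product `e_a ∧ e_b ∧ e_c ∧ e_d`
of standard coordinate 1-forms, normalized so that `(e_a ∧ e_b ∧ e_c ∧ e_d)_{abcd} = 1`;
it is the alternating sum of products of Kronecker deltas. -/
def wedge4 (a b c d i j k l : Fin 8) : ℝ :=
  Matrix.det !![kd a i, kd a j, kd a k, kd a l;
                kd b i, kd b j, kd b k, kd b l;
                kd c i, kd c j, kd c k, kd c l;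
                kd d i, kd d j, kd d k, kd d l]

/-- The fundamental 4-form `Φ` of the standard `Spin(7)`-structure on `ℝ⁸`, in components:
the totally antisymmetric 4-tensor with `Φ_{0127} = -1`, `Φ_{0236} = 1`, `Φ_{0347} = -1`,
`Φ_{0567} = -1`, `Φ_{0146} = 1`, `Φ_{0245} = 1`, `Φ_{0135} = -1`, `Φ_{3456} = -1`,
`Φ_{1457} = -1`, `Φ_{1256} = -1`, `Φ_{1234} = -1`, `Φ_{2357} = -1`, `Φ_{1367} = -1`,
`Φ_{2467} = 1`, all components not obtained from these by permutation being zero. -/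
def Phi (i j k l : Fin 8) : ℝ :=
    -wedge4 0 1 2 7 i j k l + wedge4 0 2 3 6 i j k l - wedge4 0 3 4 7 i j k l
  - wedge4 0 5 6 7 i j k l + wedge4 0 1 4 6 i j k l + wedge4 0 2 4 5 i j k l
  - wedge4 0 1 3 5 i j k l - wedge4 3 4 5 6 i j k l - wedge4 1 4 5 7 i j k l
  - wedge4 1 2 5 6 i j k l - wedge4 1 2 3 4 i j k l - wedge4 2 3 5 7 i j k l
  - wedge4 1 3 6 7 i j k l + wedge4 2 4 6 7 i j k l

/-- The Levi-Civita symbol on eight indices: `eps8 f` is the sign of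
`(f 0, …, f 7)` as a permutation of `(0, …, 7)`, and `0` if an index repeats. -/
def eps8 (f : Fin 8 → Fin 8) : ℝ :=
  if h : Function.Bijective f then ((Equiv.Perm.sign (Equiv.ofBijective f h) : ℤ) : ℝ) else 0

/-- Totally antisymmetric 4-tensors on ℝ⁸ (4-forms). -/
def FourForm : Submodule ℝ (Fin 8 → Fin 8 → Fin 8 → Fin 8 → ℝ) where
  carrier :=
    {σ | ∀ i j k l, σ i j k l = -σ j i k l ∧ σ i j k l = -σ i k j l ∧ σ i j k l = -σ i j l k}
  zero_mem' := by intro i j k l; refine ⟨by simp, by simp, by simp⟩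
  add_mem' := by
    intro a b ha hb i j k l
    refine ⟨?_, ?_, ?_⟩
    · simp only [Pi.add_apply, (ha i j k l).1, (hb i j k l).1]; ring
    · simp only [Pi.add_apply, (ha i j k l).2.1, (hb i j k l).2.1]; ring
    · simp only [Pi.add_apply, (ha i j k l).2.2, (hb i j k l).2.2]; ring
  smul_mem' := by
    intro c a ha i j k l
    refine ⟨?_, ?_, ?_⟩
    · simp only [Pi.smul_apply, smul_eq_mul, (ha i j k l).1]; ring
    · simp only [Pi.smul_apply, smul_eq_mul, (ha i j k l).2.1]; ring
    · simp only [Pi.smul_apply, smul_eq_mul, (ha i j k l).2.2]; ring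

/-- The operator `Ω_Φ` on 4-tensors:
`(Ω_Φ(σ))_{ijkl} = σ_{ijpq}Φ_{pqkl} + σ_{ikpq}Φ_{pqlj} + σ_{ilpq}Φ_{pqjk}
                 + σ_{jkpq}Φ_{pqil} + σ_{jlpq}Φ_{pqki} + σ_{klpq}Φ_{pqij}`. -/
def OmegaOp : (Fin 8 → Fin 8 → Fin 8 → Fin 8 → ℝ) →ₗ[ℝ] (Fin 8 → Fin 8 → Fin 8 → Fin 8 → ℝ) where
  toFun σ := fun i j k l =>
    (∑ p, ∑ q, σ i j p q * Phi p q k l) + (∑ p, ∑ q, σ i k p q * Phi p q l j)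
    + (∑ p, ∑ q, σ i l p q * Phi p q j k) + (∑ p, ∑ q, σ j k p q * Phi p q i l)
    + (∑ p, ∑ q, σ j l p q * Phi p q k i) + (∑ p, ∑ q, σ k l p q * Phi p q i j)
  map_add' σ τ := by
    funext i j k l
    simp only [Pi.add_apply, add_mul, Finset.sum_add_distrib]
    ring
  map_smul' c σ := by
    funext i j k l
    simp only [Pi.smul_apply, smul_eq_mul, RingHom.id_apply, Finset.mul_sum, mul_assoc, mul_add]

/-- The Hodge star operator on 4-tensors on ℝ⁸:
`(*σ)_{ijkl} = (1/24) ε_{ijklabcd} σ_{abcd}` (sum over `a,b,c,d`). -/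
def hodgeOp : (Fin 8 → Fin 8 → Fin 8 → Fin 8 → ℝ) →ₗ[ℝ] (Fin 8 → Fin 8 → Fin 8 → Fin 8 → ℝ) where
  toFun σ := fun i j k l =>
    (1/24) * ∑ a, ∑ b, ∑ c, ∑ d, eps8 ![i, j, k, l, a, b, c, d] * σ a b c d
  map_add' σ τ := by
    funext i j k l
    simp only [Pi.add_apply, mul_add, add_mul, Finset.sum_add_distrib]
  map_smul' c σ := by
    funext i j k l
    simp only [Pi.smul_apply, smul_eq_mul, RingHom.id_apply, Finset.mul_sum,
      mul_comm, mul_left_comm, mul_assoc]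

/-- `Λ⁴₁`: eigenspace of `Ω_Φ` for the eigenvalue `-24` (within 4-forms). -/
def Lambda4_1 : Submodule ℝ (Fin 8 → Fin 8 → Fin 8 → Fin 8 → ℝ) :=
  FourForm ⊓ Module.End.eigenspace OmegaOp (-24)

/-- `Λ⁴₇`: eigenspace of `Ω_Φ` for the eigenvalue `-12` (within 4-forms). -/
def Lambda4_7 : Submodule ℝ (Fin 8 → Fin 8 → Fin 8 → Fin 8 → ℝ) :=
  FourForm ⊓ Module.End.eigenspace OmegaOp (-12)

/-- `Λ⁴₂₇`: eigenspace of `Ω_Φ` for the eigenvalue `4` (within 4-forms). -/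
def Lambda4_27 : Submodule ℝ (Fin 8 → Fin 8 → Fin 8 → Fin 8 → ℝ) :=
  FourForm ⊓ Module.End.eigenspace OmegaOp 4

/-- `Λ⁴₃₅`: eigenspace of `Ω_Φ` for the eigenvalue `0` (within 4-forms). -/
def Lambda4_35 : Submodule ℝ (Fin 8 → Fin 8 → Fin 8 → Fin 8 → ℝ) :=
  FourForm ⊓ Module.End.eigenspace OmegaOp 0

/-- Self-dual 4-forms: `σ = *σ`. -/
def SelfDual4 : Submodule ℝ (Fin 8 → Fin 8 → Fin 8 → Fin 8 → ℝ) :=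
  FourForm ⊓ Module.End.eigenspace hodgeOp 1

/-- Anti-self-dual 4-forms: `σ = -*σ`. -/
def AntiSelfDual4 : Submodule ℝ (Fin 8 → Fin 8 → Fin 8 → Fin 8 → ℝ) :=
  FourForm ⊓ Module.End.eigenspace hodgeOp (-1)

/-! ### Combinatorial data: 4-subsets of `{0,…,7}` as bit masks -/

/-- Sign of a pair of indices. -/
def sg (a b : Fin 8) : ℤ := if a < b then 1 else if b < a then -1 else 0

/-- Sign of the permutation sorting four indices (`0` on repetitions). -/
def sgnZ (a b c d : Fin 8) : ℤ := sg a b * sg a c * sg a d * sg b c * sg b d * sg c d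

/-- Bit mask of four indices. -/
def mk4 (a b c d : Fin 8) : ℕ := 2 ^ a.val + 2 ^ b.val + 2 ^ c.val + 2 ^ d.val

/-- Number of bits. -/
def pc (m : ℕ) : ℕ :=
  m % 2 + m / 2 % 2 + m / 4 % 2 + m / 8 % 2 + m / 16 % 2 + m / 32 % 2 + m / 64 % 2 + m / 128 % 2

/-- The masks of 4-element subsets. -/
def masks : Finset ℕ := (Finset.range 256).filter (fun m => pc m = 4)

/-- Labels of the basis vectors by points of the affine space `AG(3,2)`. -/
def lab (a : Fin 8) : ℕ := [0, 1, 2, 4, 7, 5, 6, 3].getD a.val 0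

/-- The inverse of `lab`. -/
def labInv (n : ℕ) : Fin 8 := [0, 1, 2, 7, 3, 5, 6, 4].getD n 0

/-- Syndrome of a mask. -/
def syn (m : ℕ) : ℕ :=
  (m / 2 % 2 * 1) ^^^ (m / 4 % 2 * 2) ^^^ (m / 8 % 2 * 4) ^^^ (m / 16 % 2 * 7) ^^^
    (m / 32 % 2 * 5) ^^^ (m / 64 % 2 * 6) ^^^ (m / 128 % 2 * 3)

/-- Signs normalizing the basis 4-forms. -/
def eta (m : ℕ) : ℤ :=
  if Nat.testBit 7063506033472328784078240995106050423799752354622354936554701589577728 m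
  then -1 else 1

/-- The increasing quadruple with a given mask. -/
def dec (m : ℕ) : Fin 8 × Fin 8 × Fin 8 × Fin 8 :=
  match ([0, 1, 2, 3, 4, 5, 6, 7] : List (Fin 8)).filter (fun a => Nat.testBit m a.val) with
  | [a, b, c, d] => (a, b, c, d)
  | _ => (0, 0, 0, 0)

/-- The components of `Φ` as integers. -/
def phiZ (p q k l : Fin 8) : ℤ :=
  if syn (mk4 p q k l) = 0 then sgnZ p q k l * eta (mk4 p q k l) else 0

/-- The fourth point of the plane through three points. -/
def fourth (p k l : Fin 8) : Fin 8 := labInv (lab p ^^^ lab k ^^^ lab l)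

lemma sg_swap (a b : Fin 8) : sg a b = -sg b a := by
  revert a b; decide +kernel

lemma dec_spec : ∀ a b : Fin 8, a < b → ∀ c, b < c → ∀ d, c < d →
    dec (mk4 a b c d) = (a, b, c, d) ∧ sgnZ a b c d = 1 ∧ pc (mk4 a b c d) = 4 := by
  decide +kernel

lemma mk4_lt (a b c d : Fin 8) (h : sgnZ a b c d ≠ 0) : mk4 a b c d ∈ masks := by
  have : ∀ a b c d : Fin 8, sgnZ a b c d ≠ 0 → mk4 a b c d < 256 ∧ pc (mk4 a b c d) = 4 := by
    decide +kernel
  simpa [masks] using this a b c d h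

lemma masks_spec : ∀ m < 256, pc m = 4 →
    (dec m).1 < (dec m).2.1 ∧ (dec m).2.1 < (dec m).2.2.1 ∧ (dec m).2.2.1 < (dec m).2.2.2 ∧
    mk4 (dec m).1 (dec m).2.1 (dec m).2.2.1 (dec m).2.2.2 = m ∧ pc (255 - m) = 4 ∧
    syn (255 - m) = syn m ∧ syn m < 8 := by
  decide +kernel

lemma phiZ_fourth : ∀ p k l q : Fin 8, q ≠ fourth p k l → phiZ p q k l = 0 := by
  decide +kernel

/-- Integer-coefficient linear functional, as a list of (coefficient, mask). -/
def evalL (L : List (ℤ × ℕ)) (y : ℕ → ℝ) : ℝ := (L.map (fun x => (x.1 : ℝ) * y x.2)).sum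

/-- Coefficient of a functional. -/
def coefL (L : List (ℤ × ℕ)) (m : ℕ) : ℤ :=
  L.foldr (fun x r => if Nat.beq x.2 m then x.1 + r else r) 0

/-- One of the six terms of `Ω_Φ` as a functional. -/
def termL (a b c d : Fin 8) : List (ℤ × ℕ) :=
  ([0, 1, 2, 3, 4, 5, 6, 7] : List (Fin 8)).map (fun p =>
    (sgnZ a b p (fourth p c d) * eta (mk4 a b p (fourth p c d)) * phiZ p (fourth p c d) c d,
      mk4 a b p (fourth p c d)))

/-- A component of `Ω_Φ` as a functional. -/
def omegaL (i j k l : Fin 8) : List (ℤ × ℕ) :=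
  termL i j k l ++ termL i k l j ++ termL i l j k ++ termL j k i l ++ termL j l k i ++ termL k l i j

/-- The matrix of `Ω_Φ` in the normalized basis. -/
def matZ (t m : ℕ) : ℤ :=
  (if t = m then 2 else 0) + (if m = 255 - t then 2 else 0) + (if syn m = syn t then -2 else 0)

lemma omegaL_coef_same : ∀ a b : Fin 8, a < b → ∀ c, b < c → ∀ d, c < d →
    ∀ m < 256, syn m = syn (mk4 a b c d) → pc m = 4 →
    coefL (omegaL a b c d) m = eta (mk4 a b c d) * matZ (mk4 a b c d) m := by
  decide +kernel

lemma omegaL_syn : ∀ a b : Fin 8, a < b → ∀ c, b < c → ∀ d, c < d →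
    ∀ x ∈ omegaL a b c d, x.1 = 0 ∨ syn x.2 = syn (mk4 a b c d) := by
  decide +kernel

lemma coefL_zero (L : List (ℤ × ℕ)) (m : ℕ) (h : ∀ x ∈ L, x.1 = 0 ∨ x.2 ≠ m) :
    coefL L m = 0 := by
  induction L with
  | nil => rfl
  | cons x L ih =>
    have h1 := h x (by simp)
    have h2 := ih (fun z hz => h z (by simp [hz]))
    simp only [coefL, List.foldr_cons] at h2 ⊢
    rw [h2]
    rcases h1 with h1 | h1
    · simp [h1]
    · simp [h1]

lemma omegaL_coef (a b : Fin 8) (hab : a < b) (c : Fin 8) (hbc : b < c) (d : Fin 8) (hcd : c < d)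
    (m : ℕ) (hm : m < 256) (hp : pc m = 4) :
    coefL (omegaL a b c d) m = eta (mk4 a b c d) * matZ (mk4 a b c d) m := by
  by_cases hs : syn m = syn (mk4 a b c d)
  · exact omegaL_coef_same a b hab c hbc d hcd m hm hs hp
  · have h1 : mk4 a b c d ≠ m := fun h => hs (by rw [h])
    have h2 : m ≠ 255 - mk4 a b c d := by
      intro h
      apply hs
      have h3 := dec_spec a b hab c hbc d hcd
      have h4 : mk4 a b c d ∈ masks := mk4_lt a b c d (by rw [h3.2.1]; decide)
      simp only [masks, Finset.mem_filter, Finset.mem_range] at h4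
      rw [h]
      exact (masks_spec _ h4.1 h4.2).2.2.2.2.2.1
    rw [coefL_zero]
    · simp [matZ, hs, h1, h2]
    · intro x hx
      rcases omegaL_syn a b hab c hbc d hcd x hx with h | h
      · exact Or.inl h
      · right
        intro hxm
        exact hs (by rw [← hxm, h])

/-- All quadruples of distinct indices, as a functional. -/
def allL : List (ℤ × ℕ) :=
  let r : List (Fin 8) := [0, 1, 2, 3, 4, 5, 6, 7]
  r.flatMap fun a => r.flatMap fun b => if a = b then [] else r.flatMap fun c =>
    if a = c ∨ b = c then [] else r.flatMap fun d =>
    if a = d ∨ b = d ∨ c = d then [] else [(1, mk4 a b c d)]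

lemma allL_coef : ∀ m < 256, pc m = 4 → coefL allL m = 24 := by
  decide +kernel

/-- The product of the signs between two quadruples. -/
def crossZ (i j k l a b c d : Fin 8) : ℤ :=
  (sg i a * sg i b * sg i c * sg i d) * (sg j a * sg j b * sg j c * sg j d) *
  (sg k a * sg k b * sg k c * sg k d) * (sg l a * sg l b * sg l c * sg l d)

lemma crossZ_dec : ∀ a b : Fin 8, a < b → ∀ c, b < c → ∀ d, c < d → ∀ m < 256, pc m = 4 →
    crossZ a b c d (dec m).1 (dec m).2.1 (dec m).2.2.1 (dec m).2.2.2 =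
      if m = 255 - mk4 a b c d then eta (mk4 a b c d) * eta m else 0 := by
  decide +kernel

/-- Integer Kronecker delta. -/
def kdZ (a b : Fin 8) : ℤ := if a = b then 1 else 0

/-! ### Totally antisymmetric tensors -/

/-- Sorting principle. -/
lemma sort_principle (P : Fin 8 → Fin 8 → Fin 8 → Fin 8 → Prop)
    (h12 : ∀ a b c d, P b a c d → P a b c d) (h23 : ∀ a b c d, P a c b d → P a b c d)
    (h34 : ∀ a b c d, P a b d c → P a b c d)
    (hs : ∀ a b c d, a ≤ b → b ≤ c → c ≤ d → P a b c d) : ∀ a b c d, P a b c d := by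
  have L2 : ∀ a b c d, a ≤ b → b ≤ c → P a b c d := by
    intro a b c d h1 h2
    rcases le_total c d with h | h
    · exact hs _ _ _ _ h1 h2 h
    apply h34
    rcases le_total b d with h' | h'
    · exact hs _ _ _ _ h1 h' h
    apply h23
    rcases le_total a d with h'' | h''
    · exact hs _ _ _ _ h'' h' h2
    apply h12
    exact hs _ _ _ _ h'' h1 h2
  have L3 : ∀ a b c d, a ≤ b → P a b c d := by
    intro a b c d h1
    rcases le_total b c with h | h
    · exact L2 _ _ _ _ h1 h
    apply h23
    rcases le_total a c with h' | h'
    · exact L2 _ _ _ _ h' h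
    apply h12
    exact L2 _ _ _ _ h' h1
  intro a b c d
  rcases le_total a b with h | h
  · exact L3 _ _ _ _ h
  · apply h12
    exact L3 _ _ _ _ h

lemma form_ext {s t : Fin 8 → Fin 8 → Fin 8 → Fin 8 → ℝ} (hs : s ∈ FourForm) (ht : t ∈ FourForm)
    (h : ∀ a b : Fin 8, a < b → ∀ c, b < c → ∀ d, c < d → s a b c d = t a b c d) : s = t := by
  funext a b c d
  revert a b c d
  apply sort_principle
  · intro a b c d h'
    rw [(hs a b c d).1, (ht a b c d).1, h']
  · intro a b c d h'
    rw [(hs a b c d).2.1, (ht a b c d).2.1, h']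
  · intro a b c d h'
    rw [(hs a b c d).2.2, (ht a b c d).2.2, h']
  · intro a b c d h1 h2 h3
    rcases h1.eq_or_lt with rfl | h1
    · have := (hs a a c d).1
      have := (ht a a c d).1
      linarith
    rcases h2.eq_or_lt with rfl | h2
    · have := (hs a b b d).2.1
      have := (ht a b b d).2.1
      linarith
    rcases h3.eq_or_lt with rfl | h3
    · have := (hs a b c c).2.2
      have := (ht a b c c).2.2
      linarith
    exact h a b h1 c h2 d h3

/-- The form with given values on masks. -/
def formOf (g : ℕ → ℝ) : Fin 8 → Fin 8 → Fin 8 → Fin 8 → ℝ :=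
  fun a b c d => (sgnZ a b c d : ℝ) * g (mk4 a b c d)

lemma formOf_mem (g : ℕ → ℝ) : formOf g ∈ FourForm := by
  intro a b c d
  refine ⟨?_, ?_, ?_⟩
  · have h1 : sgnZ a b c d = -sgnZ b a c d := by
      simp only [sgnZ]; rw [sg_swap a b]; ring
    have h2 : mk4 a b c d = mk4 b a c d := by simp only [mk4]; ring
    simp only [formOf, h1, h2]; push_cast; ring
  · have h1 : sgnZ a b c d = -sgnZ a c b d := by
      simp only [sgnZ]; rw [sg_swap b c]; ring
    have h2 : mk4 a b c d = mk4 a c b d := by simp only [mk4]; ring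
    simp only [formOf, h1, h2]; push_cast; ring
  · have h1 : sgnZ a b c d = -sgnZ a b d c := by
      simp only [sgnZ]; rw [sg_swap c d]; ring
    have h2 : mk4 a b c d = mk4 a b d c := by simp only [mk4]; ring
    simp only [formOf, h1, h2]; push_cast; ring

lemma formOf_sorted (g : ℕ → ℝ) (a b : Fin 8) (hab : a < b) (c : Fin 8) (hbc : b < c)
    (d : Fin 8) (hcd : c < d) : formOf g a b c d = g (mk4 a b c d) := by
  simp [formOf, (dec_spec a b hab c hbc d hcd).2.1]

/-- The value of a form on a mask. -/
def valAt (s : Fin 8 → Fin 8 → Fin 8 → Fin 8 → ℝ) (m : ℕ) : ℝ :=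
  s (dec m).1 (dec m).2.1 (dec m).2.2.1 (dec m).2.2.2

lemma formOf_valAt {s : Fin 8 → Fin 8 → Fin 8 → Fin 8 → ℝ} (hs : s ∈ FourForm) :
    formOf (valAt s) = s := by
  apply form_ext (formOf_mem _) hs
  intro a b hab c hbc d hcd
  rw [formOf_sorted _ a b hab c hbc d hcd]
  simp [valAt, (dec_spec a b hab c hbc d hcd).1]

lemma eta_sq (m : ℕ) : (eta m : ℝ) * eta m = 1 := by
  unfold eta; split_ifs <;> norm_num

/-! ### The form `Φ` -/

/-- Integer version of `wedge4`. -/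
def wedgeZ (a b c d i j k l : Fin 8) : ℤ :=
    kdZ a i * (kdZ b j * (kdZ c k * kdZ d l - kdZ c l * kdZ d k)
             - kdZ b k * (kdZ c j * kdZ d l - kdZ c l * kdZ d j)
             + kdZ b l * (kdZ c j * kdZ d k - kdZ c k * kdZ d j))
  - kdZ a j * (kdZ b i * (kdZ c k * kdZ d l - kdZ c l * kdZ d k)
             - kdZ b k * (kdZ c i * kdZ d l - kdZ c l * kdZ d i)
             + kdZ b l * (kdZ c i * kdZ d k - kdZ c k * kdZ d i))
  + kdZ a k * (kdZ b i * (kdZ c j * kdZ d l - kdZ c l * kdZ d j)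
             - kdZ b j * (kdZ c i * kdZ d l - kdZ c l * kdZ d i)
             + kdZ b l * (kdZ c i * kdZ d j - kdZ c j * kdZ d i))
  - kdZ a l * (kdZ b i * (kdZ c j * kdZ d k - kdZ c k * kdZ d j)
             - kdZ b j * (kdZ c i * kdZ d k - kdZ c k * kdZ d i)
             + kdZ b k * (kdZ c i * kdZ d j - kdZ c j * kdZ d i))

lemma kd_cast (a b : Fin 8) : kd a b = (kdZ a b : ℝ) := by
  unfold kd kdZ; split_ifs <;> simp

lemma wedge4_cast (a b c d i j k l : Fin 8) :
    wedge4 a b c d i j k l = (wedgeZ a b c d i j k l : ℝ) := by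
  unfold wedge4 wedgeZ
  simp [Matrix.det_succ_row_zero, Fin.sum_univ_succ, kd_cast, Fin.succAbove]
  ring

lemma wedge4_mem (a b c d : Fin 8) : wedge4 a b c d ∈ FourForm := by
  intro i j k l
  simp only [wedge4_cast]
  refine ⟨?_, ?_, ?_⟩ <;> · unfold wedgeZ; push_cast; ring

/-- Integer version of `Phi`, from its definition. -/
def PhiDefZ (i j k l : Fin 8) : ℤ :=
    -wedgeZ 0 1 2 7 i j k l + wedgeZ 0 2 3 6 i j k l - wedgeZ 0 3 4 7 i j k l
  - wedgeZ 0 5 6 7 i j k l + wedgeZ 0 1 4 6 i j k l + wedgeZ 0 2 4 5 i j k l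
  - wedgeZ 0 1 3 5 i j k l - wedgeZ 3 4 5 6 i j k l - wedgeZ 1 4 5 7 i j k l
  - wedgeZ 1 2 5 6 i j k l - wedgeZ 1 2 3 4 i j k l - wedgeZ 2 3 5 7 i j k l
  - wedgeZ 1 3 6 7 i j k l + wedgeZ 2 4 6 7 i j k l

lemma PhiDefZ_sorted : ∀ a b : Fin 8, a < b → ∀ c, b < c → ∀ d, c < d →
    PhiDefZ a b c d = phiZ a b c d := by
  decide +kernel

lemma Phi_cast (a b c d : Fin 8) : Phi a b c d = (PhiDefZ a b c d : ℝ) := by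
  unfold Phi PhiDefZ
  simp only [wedge4_cast]
  push_cast
  ring

lemma Phi_mem : Phi ∈ FourForm := by
  intro i j k l
  simp only [Phi]
  refine ⟨?_, ?_, ?_⟩
  · have h := fun a b c d => (wedge4_mem a b c d i j k l).1
    simp only [h]; ring
  · have h := fun a b c d => (wedge4_mem a b c d i j k l).2.1
    simp only [h]; ring
  · have h := fun a b c d => (wedge4_mem a b c d i j k l).2.2
    simp only [h]; ring

lemma phiZ_form : (fun a b c d => (phiZ a b c d : ℝ)) =
    formOf (fun m => if syn m = 0 then (eta m : ℝ) else 0) := by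
  funext a b c d
  simp only [phiZ, formOf]
  split_ifs <;> simp

lemma Phi_eq (a b c d : Fin 8) : Phi a b c d = (phiZ a b c d : ℝ) := by
  have : Phi = (fun a b c d => (phiZ a b c d : ℝ)) := by
    apply form_ext Phi_mem
    · rw [phiZ_form]; exact formOf_mem _
    · intro a b hab c hbc d hcd
      rw [Phi_cast, PhiDefZ_sorted a b hab c hbc d hcd]
  rw [this]

/-! ### The operators preserve forms -/

lemma Omega_mem {s : Fin 8 → Fin 8 → Fin 8 → Fin 8 → ℝ} (hs : s ∈ FourForm) :
    OmegaOp s ∈ FourForm := by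
  have P : ∀ a b c d, ∑ p, ∑ q, s a b p q * Phi p q c d = -∑ p, ∑ q, s a b p q * Phi p q d c := by
    intro a b c d
    rw [← Finset.sum_neg_distrib]
    refine Finset.sum_congr rfl fun p _ => ?_
    rw [← Finset.sum_neg_distrib]
    refine Finset.sum_congr rfl fun q _ => ?_
    rw [(Phi_mem p q c d).2.2]; ring
  have Q : ∀ a b c d, ∑ p, ∑ q, s a b p q * Phi p q c d = -∑ p, ∑ q, s b a p q * Phi p q c d := by
    intro a b c d
    rw [← Finset.sum_neg_distrib]
    refine Finset.sum_congr rfl fun p _ => ?_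
    rw [← Finset.sum_neg_distrib]
    refine Finset.sum_congr rfl fun q _ => ?_
    rw [(hs a b p q).1]; ring
  intro i j k l
  simp only [OmegaOp, LinearMap.coe_mk, AddHom.coe_mk]
  refine ⟨?_, ?_, ?_⟩
  · have h1 := Q i j k l
    have h2 := P i k l j
    have h3 := P i l j k
    have h4 := P j k i l
    have h5 := P j l k i
    have h6 := P k l i j
    linarith
  · have h1 := Q j k i l
    have h2 := P i k l j
    have h3 := P i l j k
    have h4 := P i j k l
    have h5 := P j l k i
    have h6 := P k l i j
    linarith
  · have h1 := Q k l i j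
    have h2 := P i k l j
    have h3 := P i l j k
    have h4 := P i j k l
    have h5 := P j l k i
    have h6 := P j k i l
    linarith

/-- The Levi-Civita symbol as a product of signs. -/
lemma eps8_prod (f : Fin 8 → Fin 8) :
    eps8 f = ((∏ i, ∏ j, if i < j then sg (f i) (f j) else 1 : ℤ) : ℝ) := by
  unfold eps8
  split_ifs with h
  · congr 1
    rw [Equiv.Perm.sign_eq_prod_prod_Ioi]
    push_cast
    refine Finset.prod_congr rfl fun i _ => ?_
    rw [← Finset.prod_filter]
    refine Finset.prod_congr (by ext; simp) fun j hj => ?_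
    have hj : i < j := by simpa using hj
    have hne : f i ≠ f j := fun e => hj.ne (h.1 e)
    simp only [Equiv.ofBijective_apply, sg]
    rcases hne.lt_or_gt with h1 | h1
    · simp [h1]
    · simp [h1, not_lt.2 h1.le]
  · have : ¬ Function.Injective f := fun hi => h (Finite.injective_iff_bijective.1 hi)
    simp only [Function.Injective] at this
    push Not at this
    obtain ⟨i, j, hij, hne⟩ := this
    have key : ∀ i j, i < j → f i = f j →
        (∏ i, ∏ j, if i < j then sg (f i) (f j) else 1 : ℤ) = 0 := by
      intro i j hlt he
      apply Finset.prod_eq_zero (Finset.mem_univ i)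
      apply Finset.prod_eq_zero (Finset.mem_univ j)
      simp [hlt, he, sg]
    rcases hne.lt_or_gt with h1 | h1
    · rw [key i j h1 hij]; simp
    · rw [key j i h1 hij.symm]; simp

lemma eps8_eq (i j k l a b c d : Fin 8) :
    eps8 ![i, j, k, l, a, b, c, d] =
      ((sgnZ i j k l * sgnZ a b c d * crossZ i j k l a b c d : ℤ) : ℝ) := by
  rw [eps8_prod]
  congr 1
  simp only [Fin.prod_univ_eight, sgnZ, crossZ]
  simp (decide := true) only [if_true, if_false]
  simp only [Matrix.cons_val]
  ring

/-! ### Coordinates -/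

/-- Coordinate space. -/
abbrev Crd := {m : ℕ // m ∈ masks} → ℝ

lemma mem_masks {m : ℕ} : m ∈ masks ↔ m < 256 ∧ pc m = 4 := by simp [masks]

/-- Extension of a coordinate vector by zero. -/
def ev (y : Crd) (m : ℕ) : ℝ := if h : m ∈ masks then y ⟨m, h⟩ else 0

lemma ev_mem (y : Crd) (m : {m : ℕ // m ∈ masks}) : ev y m = y m := by
  simp [ev, m.2]

/-- The form with given coordinates. -/
def toForm : Crd →ₗ[ℝ] (Fin 8 → Fin 8 → Fin 8 → Fin 8 → ℝ) where
  toFun y := formOf (fun m => eta m * ev y m)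
  map_add' x y := by
    funext a b c d
    simp only [formOf, ev, Pi.add_apply]
    split_ifs <;> ring
  map_smul' r y := by
    funext a b c d
    simp only [formOf, ev, Pi.smul_apply, smul_eq_mul, RingHom.id_apply]
    split_ifs <;> ring

lemma toForm_apply (y : Crd) : toForm y = formOf (fun m => eta m * ev y m) := rfl

lemma toForm_mem (y : Crd) : toForm y ∈ FourForm := by
  rw [toForm_apply]; exact formOf_mem _

lemma toForm_injective : Function.Injective toForm := by
  rw [← LinearMap.ker_eq_bot, LinearMap.ker_eq_bot']
  intro y hy
  funext m
  have hm := mem_masks.1 m.2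
  obtain ⟨h1, h2, h3, h4, -⟩ := masks_spec m hm.1 hm.2
  have := congrFun (congrFun (congrFun (congrFun hy (dec m).1) (dec m).2.1) (dec m).2.2.1) (dec m).2.2.2
  rw [toForm_apply, formOf_sorted _ _ _ h1 _ h2 _ h3, h4, ev_mem] at this
  have h5 := eta_sq m
  have h6 : (eta m : ℝ) * ((eta m : ℝ) * y m) = 0 := by rw [this]; simp
  rw [← mul_assoc, h5, one_mul] at h6
  simpa using h6

lemma toForm_surj {s : Fin 8 → Fin 8 → Fin 8 → Fin 8 → ℝ} (hs : s ∈ FourForm) :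
    ∃ y, toForm y = s := by
  refine ⟨fun m => eta m * valAt s m, ?_⟩
  rw [toForm_apply]
  conv_rhs => rw [← formOf_valAt hs]
  funext a b c d
  simp only [formOf]
  by_cases h : sgnZ a b c d = 0
  · simp [h]
  · have hm := mk4_lt a b c d h
    rw [ev, dif_pos hm, ← mul_assoc (eta _ : ℝ), eta_sq, one_mul]

lemma range_toForm : LinearMap.range toForm = FourForm := by
  ext s
  constructor
  · rintro ⟨y, rfl⟩; exact toForm_mem y
  · intro hs; exact toForm_surj hs

lemma evalL_eq (L : List (ℤ × ℕ)) (y : ℕ → ℝ) (hy : ∀ m ∉ masks, y m = 0) :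
    evalL L y = ∑ m ∈ masks, (coefL L m : ℝ) * y m := by
  induction L with
  | nil => simp [evalL, coefL]
  | cons x L ih =>
    have h1 : evalL (x :: L) y = (x.1 : ℝ) * y x.2 + evalL L y := by simp [evalL]
    have h2 : ∀ m, (coefL (x :: L) m : ℝ) * y m =
        (if x.2 = m then (x.1 : ℝ) * y m else 0) + (coefL L m : ℝ) * y m := by
      intro m
      simp only [coefL, List.foldr_cons]
      by_cases hx : x.2 = m
      · rw [if_pos (by simp [hx]), if_pos hx]; push_cast; ring
      · rw [if_neg (by simp [hx]), if_neg hx]; ring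
    rw [h1, ih, Finset.sum_congr rfl (fun m _ => h2 m), Finset.sum_add_distrib,
      Finset.sum_ite_eq]
    congr 1
    split_ifs with h
    · rfl
    · rw [hy _ h, mul_zero]

lemma evalL_append (L M : List (ℤ × ℕ)) (y : ℕ → ℝ) :
    evalL (L ++ M) y = evalL L y + evalL M y := by
  simp [evalL]

lemma sum_list (g : Fin 8 → ℝ) :
    ∑ p, g p = (([0, 1, 2, 3, 4, 5, 6, 7] : List (Fin 8)).map g).sum := by
  simp [Fin.sum_univ_eight]; ring

lemma termL_eval (y : ℕ → ℝ) (a b c d : Fin 8) :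
    ∑ p, ∑ q, formOf (fun m => eta m * y m) a b p q * Phi p q c d = evalL (termL a b c d) y := by
  have : ∀ p, ∑ q, formOf (fun m => eta m * y m) a b p q * Phi p q c d =
      ((sgnZ a b p (fourth p c d) * eta (mk4 a b p (fourth p c d)) *
        phiZ p (fourth p c d) c d : ℤ) : ℝ) * y (mk4 a b p (fourth p c d)) := by
    intro p
    rw [Finset.sum_eq_single (fourth p c d)]
    · rw [Phi_eq, formOf]; push_cast; ring
    · intro q _ hq
      rw [Phi_eq, phiZ_fourth p c d q hq]; simp
    · simp
  rw [Finset.sum_congr rfl (fun p _ => this p), sum_list, evalL, termL, List.map_map]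
  rfl

/-- The complement map on masks. -/
def cpl (t : {m : ℕ // m ∈ masks}) : {m : ℕ // m ∈ masks} :=
  ⟨255 - t, by
    have := mem_masks.1 t.2
    exact mem_masks.2 ⟨by omega, (masks_spec t this.1 this.2).2.2.2.2.1⟩⟩

lemma cpl_cpl (t) : cpl (cpl t) = t := by
  have := mem_masks.1 t.2
  apply Subtype.ext
  simp only [cpl]
  omega

lemma syn_cpl (t) : syn (cpl t) = syn t := by
  have := mem_masks.1 t.2
  exact (masks_spec t this.1 this.2).2.2.2.2.2.1

/-- The operator `Ω_Φ` in coordinates. -/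
lemma Omega_toForm (y z : Crd)
    (h : ∀ t, z t = 2 * y t + 2 * y (cpl t) - 2 * ∑ s : {m : ℕ // m ∈ masks}, if syn s = syn t then y s else 0) :
    OmegaOp (toForm y) = toForm z := by
  apply form_ext (Omega_mem (toForm_mem y)) (toForm_mem z)
  intro a b hab c hbc d hcd
  have hm : mk4 a b c d ∈ masks :=
    mk4_lt a b c d (by rw [(dec_spec a b hab c hbc d hcd).2.1]; decide)
  have hc : 255 - mk4 a b c d ∈ masks := (cpl ⟨_, hm⟩).2
  have e1 : OmegaOp (toForm y) a b c d = evalL (omegaL a b c d) (ev y) := by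
    simp only [OmegaOp, LinearMap.coe_mk, AddHom.coe_mk, toForm_apply, termL_eval, omegaL,
      evalL_append]
  rw [e1, evalL_eq _ _ (fun m hm => by simp [ev, hm]), toForm_apply,
    formOf_sorted _ a b hab c hbc d hcd]
  have e2 : ∀ m ∈ masks, (coefL (omegaL a b c d) m : ℝ) * ev y m =
      eta (mk4 a b c d) * ((if mk4 a b c d = m then 2 * ev y m else 0) +
        (if 255 - mk4 a b c d = m then 2 * ev y m else 0) -
        2 * (if syn m = syn (mk4 a b c d) then ev y m else 0)) := by
    intro m hm
    have := mem_masks.1 hm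
    rw [omegaL_coef a b hab c hbc d hcd m this.1 this.2]
    simp only [matZ, eq_comm (a := m)]
    split_ifs <;> push_cast <;> ring
  rw [Finset.sum_congr rfl e2, ← Finset.mul_sum]
  congr 1
  rw [Finset.sum_sub_distrib, Finset.sum_add_distrib, Finset.sum_ite_eq, Finset.sum_ite_eq,
    if_pos hm, if_pos hc, ← Finset.mul_sum]
  have e3 := ev_mem z ⟨_, hm⟩
  have e4 := ev_mem y ⟨_, hm⟩
  have e5 := ev_mem y (cpl ⟨_, hm⟩)
  have e6 := h ⟨_, hm⟩
  have e7 : (∑ s : {m // m ∈ masks}, if syn s = syn (mk4 a b c d) then y s else 0) =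
      ∑ m ∈ masks, if syn m = syn (mk4 a b c d) then ev y m else 0 := by
    rw [← Finset.sum_coe_sort masks]
    exact Finset.sum_congr rfl (fun m _ => by rw [ev_mem])
  simp only [cpl] at *
  rw [e3, e4, e5, e6, e7]

lemma evalL_flatMap {α : Type*} (l : List α) (h : α → List (ℤ × ℕ)) (y : ℕ → ℝ) :
    evalL (l.flatMap h) y = (l.map (fun a => evalL (h a) y)).sum := by
  induction l with
  | nil => simp [evalL]
  | cons x l ih => rw [List.flatMap_cons, evalL_append, ih]; simp

lemma sg_self (a : Fin 8) : sg a a = 0 := by simp [sg]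

lemma sg_sq {a b : Fin 8} (h : a ≠ b) : (sg a b : ℝ) ^ 2 = 1 := by
  unfold sg
  rcases h.lt_or_gt with h1 | h1
  · simp [h1]
  · simp [h1, not_lt.2 h1.le]

lemma sum_sq (y : ℕ → ℝ) :
    ∑ a, ∑ b, ∑ c, ∑ d, (sgnZ a b c d : ℝ) ^ 2 * y (mk4 a b c d) = evalL allL y := by
  rw [allL, evalL_flatMap, sum_list]
  congr 1
  refine List.map_congr_left fun a _ => ?_
  rw [evalL_flatMap, sum_list]
  congr 1
  refine List.map_congr_left fun b _ => ?_
  by_cases hab : a = b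
  · simp [hab, sgnZ, sg_self, evalL]
  rw [if_neg hab, evalL_flatMap, sum_list]
  congr 1
  refine List.map_congr_left fun c _ => ?_
  by_cases hc : a = c ∨ b = c
  · rw [if_pos hc]
    rcases hc with rfl | rfl <;> simp [sgnZ, sg_self, evalL]
  rw [if_neg hc, evalL_flatMap, sum_list]
  congr 1
  refine List.map_congr_left fun d _ => ?_
  by_cases hd : a = d ∨ b = d ∨ c = d
  · rw [if_pos hd]
    rcases hd with rfl | rfl | rfl <;> simp [sgnZ, sg_self, evalL]
  rw [if_neg hd]
  push Not at hc hd
  simp [sgnZ, mul_pow, sg_sq hab, sg_sq hc.1, sg_sq hc.2, sg_sq hd.1, sg_sq hd.2.1, sg_sq hd.2.2,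
    evalL]

lemma sum_forms (g h : ℕ → ℝ) (hg : ∀ m ∉ masks, h m = 0) :
    ∑ a, ∑ b, ∑ c, ∑ d, formOf g a b c d * formOf h a b c d = 24 * ∑ m ∈ masks, g m * h m := by
  have e : ∀ a b c d, formOf g a b c d * formOf h a b c d =
      (sgnZ a b c d : ℝ) ^ 2 * (fun m => g m * h m) (mk4 a b c d) := by
    intro a b c d; simp only [formOf]; ring
  simp only [e]
  rw [sum_sq (fun m => g m * h m), evalL_eq _ _ (fun m hm => by simp [hg m hm]), Finset.mul_sum]
  refine Finset.sum_congr rfl fun m hm => ?_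
  have := mem_masks.1 hm
  rw [allL_coef m this.1 this.2]
  norm_num

lemma hodge_mem (s : Fin 8 → Fin 8 → Fin 8 → Fin 8 → ℝ) : hodgeOp s ∈ FourForm := by
  have key : ∀ i j k l i' j' k' l', (∀ a b c d, eps8 ![i, j, k, l, a, b, c, d] =
      -eps8 ![i', j', k', l', a, b, c, d]) → hodgeOp s i j k l = - hodgeOp s i' j' k' l' := by
    intro i j k l i' j' k' l' h
    simp only [hodgeOp, LinearMap.coe_mk, AddHom.coe_mk, h, neg_mul, Finset.sum_neg_distrib,
      mul_neg]
  intro i j k l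
  refine ⟨key _ _ _ _ _ _ _ _ ?_, key _ _ _ _ _ _ _ _ ?_, key _ _ _ _ _ _ _ _ ?_⟩
  · intro a b c d
    simp only [eps8_eq, sgnZ, crossZ]
    rw [sg_swap i j]; push_cast; ring
  · intro a b c d
    simp only [eps8_eq, sgnZ, crossZ]
    rw [sg_swap j k]; push_cast; ring
  · intro a b c d
    simp only [eps8_eq, sgnZ, crossZ]
    rw [sg_swap k l]; push_cast; ring

lemma eps8_mem (i j k l : Fin 8) :
    (fun a b c d => eps8 ![i, j, k, l, a, b, c, d]) ∈ FourForm := by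
  intro a b c d
  simp only [eps8_eq, sgnZ, crossZ]
  refine ⟨?_, ?_, ?_⟩
  · rw [sg_swap a b]; push_cast; ring
  · rw [sg_swap b c]; push_cast; ring
  · rw [sg_swap c d]; push_cast; ring

/-- The Hodge star in coordinates. -/
lemma hodge_toForm (y z : Crd) (h : ∀ t, z t = y (cpl t)) :
    hodgeOp (toForm y) = toForm z := by
  apply form_ext (hodge_mem _) (toForm_mem z)
  intro a b hab c hbc d hcd
  have hds := dec_spec a b hab c hbc d hcd
  have hm : mk4 a b c d ∈ masks := mk4_lt a b c d (by rw [hds.2.1]; decide)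
  have hc : 255 - mk4 a b c d ∈ masks := (cpl ⟨_, hm⟩).2
  have e1 : hodgeOp (toForm y) a b c d = (1 / 24) * ∑ p, ∑ q, ∑ r, ∑ s,
      formOf (valAt (fun p q r s => eps8 ![a, b, c, d, p, q, r, s])) p q r s *
      formOf (fun m => eta m * ev y m) p q r s := by
    rw [formOf_valAt (eps8_mem a b c d)]
    rfl
  rw [e1, sum_forms _ _ (fun m hm => by simp [ev, hm]), toForm_apply,
    formOf_sorted _ a b hab c hbc d hcd]
  have e2 : ∀ m ∈ masks, valAt (fun p q r s => eps8 ![a, b, c, d, p, q, r, s]) m *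
      (eta m * ev y m) = if 255 - mk4 a b c d = m then eta (mk4 a b c d) * ev y m else 0 := by
    intro m hm
    have h2 := mem_masks.1 hm
    obtain ⟨h3, h4, h5, -⟩ := masks_spec m h2.1 h2.2
    simp only [valAt]
    rw [eps8_eq, hds.2.1, (dec_spec _ _ h3 _ h4 _ h5).2.1,
      crossZ_dec a b hab c hbc d hcd m h2.1 h2.2]
    simp only [eq_comm (a := m)]
    split_ifs
    · push_cast
      linear_combination ((eta (mk4 a b c d) : ℝ) * ev y m) * eta_sq m
    · simp
  rw [Finset.sum_congr rfl e2, Finset.sum_ite_eq, if_pos hc]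
  have e3 := ev_mem z ⟨_, hm⟩
  have e5 := ev_mem y (cpl ⟨_, hm⟩)
  have e6 := h ⟨_, hm⟩
  simp only [cpl] at *
  rw [e3, e5, e6]
  ring

/-! ### The projections in coordinates -/

/-- Index set of the coordinates. -/
abbrev Idx := {m : ℕ // m ∈ masks}

/-- Block sums. -/
def blk (y : Crd) (k : ℕ) : ℝ := ∑ s : Idx, if syn s = k then y s else 0

lemma blk_cpl (y z : Crd) (h : ∀ t, z t = y (cpl t)) (k : ℕ) : blk z k = blk y k := by
  unfold blk
  apply Finset.sum_bijective cpl
  · exact (Function.Involutive.bijective cpl_cpl)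
  · simp
  · intro s _
    rw [h, syn_cpl]

lemma count_eq : ∀ k < 8, (∑ m ∈ masks, if syn m = k then 1 else 0 : ℕ) = if k = 0 then 14 else 8 := by
  decide +kernel

lemma blk_const (r : ℝ) (y : Crd) (k : ℕ) (hk : k < 8) (h : ∀ t : Idx, syn t = k → y t = r) :
    blk y k = (if k = 0 then 14 else 8) * r := by
  have h1 : blk y k = ∑ s : Idx, (fun m : ℕ => ((if syn m = k then 1 else 0 : ℕ) : ℝ) * r) s := by
    unfold blk
    refine Finset.sum_congr rfl fun s _ => ?_
    by_cases hs : syn s = k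
    · simp [hs, h s hs]
    · simp [hs]
  rw [h1, Finset.sum_coe_sort masks (fun m : ℕ => ((if syn m = k then 1 else 0 : ℕ) : ℝ) * r),
    ← Finset.sum_mul, ← Nat.cast_sum, count_eq k hk]
  split_ifs <;> norm_num

lemma syn_lt (t : Idx) : syn t < 8 := by
  have := mem_masks.1 t.2
  exact (masks_spec t this.1 this.2).2.2.2.2.2.2

/-- Matrix of the projection to `Λ⁴₁`. -/
def matP1 : Matrix Idx Idx ℝ :=
  Matrix.of fun t s => if syn t = 0 then (if syn s = syn t then 1 / 14 else 0) else 0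

/-- Matrix of the projection to `Λ⁴₇`. -/
def matP7 : Matrix Idx Idx ℝ :=
  Matrix.of fun t s => if syn t = 0 then 0 else (if syn s = syn t then 1 / 8 else 0)

/-- Matrix of the Hodge star. -/
def matC : Matrix Idx Idx ℝ := Matrix.of fun t s => if cpl t = s then 1 else 0

/-- Projection to `Λ⁴₁`. -/
def P1 : Crd →ₗ[ℝ] Crd := Matrix.toLin' matP1

/-- Projection to `Λ⁴₇`. -/
def P7 : Crd →ₗ[ℝ] Crd := Matrix.toLin' matP7

/-- The Hodge star. -/
def Cs : Crd →ₗ[ℝ] Crd := Matrix.toLin' matC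

lemma P1_apply (y : Crd) (t : Idx) : P1 y t = if syn t = 0 then 1 / 14 * blk y (syn t) else 0 := by
  simp only [P1, Matrix.toLin'_apply, Matrix.mulVec, dotProduct, matP1, Matrix.of_apply, blk,
    Finset.mul_sum]
  split_ifs with h
  · refine Finset.sum_congr rfl fun s _ => ?_
    split_ifs <;> ring
  · simp

lemma P7_apply (y : Crd) (t : Idx) : P7 y t = if syn t = 0 then 0 else 1 / 8 * blk y (syn t) := by
  simp only [P7, Matrix.toLin'_apply, Matrix.mulVec, dotProduct, matP7, Matrix.of_apply, blk,
    Finset.mul_sum]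
  split_ifs with h
  · simp
  · refine Finset.sum_congr rfl fun s _ => ?_
    split_ifs <;> ring

lemma Cs_apply (y : Crd) (t : Idx) : Cs y t = y (cpl t) := by
  simp [Cs, Matrix.mulVec, dotProduct, matC]

lemma blk_P1 (y : Crd) (t : Idx) : blk (P1 y) (syn t) = if syn t = 0 then blk y (syn t) else 0 := by
  rw [blk_const (if syn t = 0 then 1 / 14 * blk y (syn t) else 0) _ _ (syn_lt t)]
  · split_ifs <;> ring
  · intro s hs
    rw [P1_apply, hs]

lemma blk_P7 (y : Crd) (t : Idx) : blk (P7 y) (syn t) = if syn t = 0 then 0 else blk y (syn t) := by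
  rw [blk_const (if syn t = 0 then 0 else 1 / 8 * blk y (syn t)) _ _ (syn_lt t)]
  · split_ifs <;> ring
  · intro s hs
    rw [P7_apply, hs]

lemma P1_P1 (y : Crd) : P1 (P1 y) = P1 y := by
  funext t
  rw [P1_apply, P1_apply, blk_P1]
  split_ifs <;> rfl

lemma P1_P7 (y : Crd) : P1 (P7 y) = 0 := by
  funext t
  rw [P1_apply, blk_P7]
  split_ifs <;> simp

lemma P7_P1 (y : Crd) : P7 (P1 y) = 0 := by
  funext t
  rw [P7_apply, blk_P1]
  split_ifs <;> simp

lemma P7_P7 (y : Crd) : P7 (P7 y) = P7 y := by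
  funext t
  rw [P7_apply, P7_apply, blk_P7]
  split_ifs <;> rfl

lemma P1_Cs (y : Crd) : P1 (Cs y) = P1 y := by
  funext t
  rw [P1_apply, P1_apply, blk_cpl y (Cs y) (Cs_apply y)]

lemma P7_Cs (y : Crd) : P7 (Cs y) = P7 y := by
  funext t
  rw [P7_apply, P7_apply, blk_cpl y (Cs y) (Cs_apply y)]

lemma Cs_P1 (y : Crd) : Cs (P1 y) = P1 y := by
  funext t
  rw [Cs_apply, P1_apply, P1_apply, syn_cpl]

lemma Cs_P7 (y : Crd) : Cs (P7 y) = P7 y := by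
  funext t
  rw [Cs_apply, P7_apply, P7_apply, syn_cpl]

lemma Cs_Cs (y : Crd) : Cs (Cs y) = y := by
  funext t
  rw [Cs_apply, Cs_apply, cpl_cpl]

/-- Projection to `Λ⁴₃₅`. -/
def P35 : Crd →ₗ[ℝ] Crd := (1 / 2 : ℝ) • (LinearMap.id - Cs)

/-- Projection to `Λ⁴₂₇`. -/
def P27 : Crd →ₗ[ℝ] Crd := (1 / 2 : ℝ) • (LinearMap.id + Cs) - P1 - P7

/-- `Ω_Φ` in coordinates. -/
def Tc : Crd →ₗ[ℝ] Crd :=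
  (2 : ℝ) • LinearMap.id + (2 : ℝ) • Cs - (28 : ℝ) • P1 - (16 : ℝ) • P7

lemma P35_apply (y : Crd) : P35 y = (1 / 2 : ℝ) • (y - Cs y) := rfl

lemma P27_apply (y : Crd) : P27 y = (1 / 2 : ℝ) • (y + Cs y) - P1 y - P7 y := rfl

lemma Tc_apply (y : Crd) :
    Tc y = (2 : ℝ) • y + (2 : ℝ) • Cs y - (28 : ℝ) • P1 y - (16 : ℝ) • P7 y := rfl

lemma Omega_f (y : Crd) : OmegaOp (toForm y) = toForm (Tc y) := by
  apply Omega_toForm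
  intro t
  have : (∑ s : {m : ℕ // m ∈ masks}, if syn s = syn t then y s else 0) = blk y (syn t) := rfl
  rw [this, Tc_apply]
  simp only [Pi.sub_apply, Pi.add_apply, Pi.smul_apply, smul_eq_mul, P1_apply, P7_apply, Cs_apply]
  split_ifs <;> ring

lemma hodge_f (y : Crd) : hodgeOp (toForm y) = toForm (Cs y) :=
  hodge_toForm y _ (Cs_apply y)

lemma P1_T (y : Crd) : P1 (Tc y) = (-24 : ℝ) • P1 y := by
  simp only [Tc_apply, map_add, map_sub, map_smul, P1_Cs, P1_P1, P1_P7]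
  module

lemma P7_T (y : Crd) : P7 (Tc y) = (-12 : ℝ) • P7 y := by
  simp only [Tc_apply, map_add, map_sub, map_smul, P7_Cs, P7_P1, P7_P7]
  module

lemma Cs_T (y : Crd) : Cs (Tc y) = Tc y := by
  simp only [Tc_apply, map_add, map_sub, map_smul, Cs_Cs, Cs_P1, Cs_P7]
  module

lemma smul_cancel {r s : ℝ} {x : Crd} (h : r • x = s • x) (hrs : r ≠ s) : x = 0 := by
  have : (r - s) • x = 0 := by rw [sub_smul, h, sub_self]
  exact (smul_eq_zero.1 this).resolve_left (sub_ne_zero.2 hrs)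

/-- Eigenspaces as ranges. -/
lemma eig_range (T P : Crd →ₗ[ℝ] Crd) (r : ℝ) (h1 : ∀ y, T (P y) = r • P y)
    (h2 : ∀ y, T y = r • y → P y = y) : Module.End.eigenspace T r = LinearMap.range P := by
  ext y
  rw [Module.End.mem_eigenspace_iff]
  constructor
  · intro h; exact ⟨y, h2 y h⟩
  · rintro ⟨x, rfl⟩; exact h1 x

lemma eig_info {y : Crd} {r : ℝ} (h : Tc y = r • y) :
    (r ≠ -24 → P1 y = 0) ∧ (r ≠ -12 → P7 y = 0) ∧ (r ≠ 0 → Cs y = y) := by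
  refine ⟨fun hr => ?_, fun hr => ?_, fun hr => ?_⟩
  · have := P1_T y
    rw [h, map_smul] at this
    exact smul_cancel this hr
  · have := P7_T y
    rw [h, map_smul] at this
    exact smul_cancel this hr
  · have := Cs_T y
    rw [h, map_smul] at this
    exact smul_right_injective _ hr this

lemma eig1 : Module.End.eigenspace Tc (-24) = LinearMap.range P1 := by
  apply eig_range
  · intro y
    simp only [Tc_apply, P1_P1, P7_P1, Cs_P1]
    module
  · intro y h
    obtain ⟨-, h2, h3⟩ := eig_info h
    rw [Tc_apply, h2 (by norm_num), h3 (by norm_num)] at h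
    have e : P1 y - y = (-1 / 28 : ℝ) • ((2 : ℝ) • y + (2 : ℝ) • y - (28 : ℝ) • P1 y
      - (16 : ℝ) • (0 : Crd) - (-24 : ℝ) • y) := by module
    rw [h, sub_self, smul_zero] at e
    exact sub_eq_zero.1 e

lemma eig7 : Module.End.eigenspace Tc (-12) = LinearMap.range P7 := by
  apply eig_range
  · intro y
    simp only [Tc_apply, P1_P7, P7_P7, Cs_P7]
    module
  · intro y h
    obtain ⟨h1, -, h3⟩ := eig_info h
    rw [Tc_apply, h1 (by norm_num), h3 (by norm_num)] at h
    have e : P7 y - y = (-1 / 16 : ℝ) • ((2 : ℝ) • y + (2 : ℝ) • y - (28 : ℝ) • (0 : Crd)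
      - (16 : ℝ) • P7 y - (-12 : ℝ) • y) := by module
    rw [h, sub_self, smul_zero] at e
    exact sub_eq_zero.1 e

lemma eig27 : Module.End.eigenspace Tc 4 = LinearMap.range P27 := by
  apply eig_range
  · intro y
    simp only [Tc_apply, P27_apply, map_add, map_sub, map_smul, P1_P1, P1_P7, P7_P1, P7_P7, Cs_P1,
      Cs_P7, P1_Cs, P7_Cs, Cs_Cs]
    module
  · intro y h
    obtain ⟨h1, h2, h3⟩ := eig_info h
    rw [P27_apply, h1 (by norm_num), h2 (by norm_num), h3 (by norm_num)]
    module

lemma eig35 : Module.End.eigenspace Tc 0 = LinearMap.range P35 := by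
  apply eig_range
  · intro y
    simp only [Tc_apply, P35_apply, map_sub, map_smul, P1_Cs, P7_Cs, Cs_Cs]
    module
  · intro y h
    obtain ⟨h1, h2, -⟩ := eig_info h
    rw [Tc_apply, h1 (by norm_num), h2 (by norm_num)] at h
    have e : P35 y - y = (-1 / 4 : ℝ) • ((2 : ℝ) • y + (2 : ℝ) • Cs y - (28 : ℝ) • (0 : Crd)
      - (16 : ℝ) • (0 : Crd) - (0 : ℝ) • y) := by rw [P35_apply]; module
    rw [h, sub_self, smul_zero] at e
    exact sub_eq_zero.1 e

lemma eigCm : Module.End.eigenspace Cs (-1) = LinearMap.range P35 := by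
  apply eig_range
  · intro y
    simp only [P35_apply, map_sub, map_smul, Cs_Cs]
    module
  · intro y h
    rw [P35_apply, h]
    module

lemma sum_three {y : Crd} (h : Cs y = y) : P1 y + P7 y + P27 y = y := by
  rw [P27_apply, h]; module

lemma sum_four (y : Crd) : P1 y + P7 y + P27 y + P35 y = y := by
  rw [P27_apply, P35_apply]; module

lemma eigCp : Module.End.eigenspace Cs 1 =
    LinearMap.range P1 ⊔ LinearMap.range P7 ⊔ LinearMap.range P27 := by
  apply le_antisymm
  · intro y hy
    rw [Module.End.mem_eigenspace_iff, one_smul] at hy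
    rw [← sum_three hy]
    exact Submodule.add_mem_sup (Submodule.add_mem_sup ⟨y, rfl⟩ ⟨y, rfl⟩) ⟨y, rfl⟩
  · refine sup_le (sup_le ?_ ?_) ?_
    · rintro _ ⟨y, rfl⟩
      rw [Module.End.mem_eigenspace_iff, one_smul, Cs_P1]
    · rintro _ ⟨y, rfl⟩
      rw [Module.End.mem_eigenspace_iff, one_smul, Cs_P7]
    · rintro _ ⟨y, rfl⟩
      rw [Module.End.mem_eigenspace_iff, one_smul]
      simp only [P27_apply, map_add, map_sub, map_smul, Cs_P1, Cs_P7, Cs_Cs]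
      module

lemma sup_top : LinearMap.range P1 ⊔ LinearMap.range P7 ⊔ LinearMap.range P27 ⊔
    LinearMap.range P35 = ⊤ := by
  rw [eq_top_iff]
  intro y _
  rw [← sum_four y]
  exact Submodule.add_mem_sup (Submodule.add_mem_sup
    (Submodule.add_mem_sup ⟨y, rfl⟩ ⟨y, rfl⟩) ⟨y, rfl⟩) ⟨y, rfl⟩

/-! ### Dimensions -/

lemma card_Idx : Fintype.card Idx = 70 := by
  rw [Fintype.card_coe]; decide +kernel

lemma trace_P1 : LinearMap.trace ℝ Crd P1 = 1 := by
  rw [P1, Matrix.trace_toLin'_eq, Matrix.trace]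
  have h := blk_const (1 / 14) (fun _ => 1 / 14) 0 (by norm_num) (fun _ _ => rfl)
  simp only [Matrix.diag_apply, matP1, Matrix.of_apply, if_true]
  rw [blk] at h
  rw [h]
  norm_num

lemma trace_P17 : LinearMap.trace ℝ Crd ((14 : ℝ) • P1 + (8 : ℝ) • P7) = 70 := by
  rw [P1, P7, map_add, map_smul, map_smul, Matrix.trace_toLin'_eq, Matrix.trace_toLin'_eq,
    Matrix.trace, Matrix.trace, smul_eq_mul, smul_eq_mul, Finset.mul_sum, Finset.mul_sum,
    ← Finset.sum_add_distrib]
  have : ∀ i : Idx, 14 * matP1.diag i + 8 * matP7.diag i = 1 := by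
    intro i
    simp only [Matrix.diag_apply, matP1, matP7, Matrix.of_apply, if_true]
    split_ifs <;> norm_num
  rw [Finset.sum_congr rfl (fun i _ => this i), Finset.sum_const, Finset.card_univ, card_Idx]
  norm_num

lemma trace_P7 : LinearMap.trace ℝ Crd P7 = 7 := by
  have := trace_P17
  rw [map_add, map_smul, map_smul, trace_P1, smul_eq_mul, smul_eq_mul] at this
  linarith

lemma trace_Cs : LinearMap.trace ℝ Crd Cs = 0 := by
  rw [Cs, Matrix.trace_toLin'_eq, Matrix.trace]
  apply Finset.sum_eq_zero
  intro t _
  simp only [Matrix.diag_apply, matC, Matrix.of_apply]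
  rw [if_neg]
  intro h
  have h1 := congrArg Subtype.val h
  have := mem_masks.1 t.2
  simp only [cpl] at h1
  omega

lemma trace_id70 : LinearMap.trace ℝ Crd LinearMap.id = 70 := by
  rw [LinearMap.trace_id, Module.finrank_fintype_fun_eq_card, card_Idx]
  norm_num

lemma finrank_range_of {P : Crd →ₗ[ℝ] Crd} (h : ∀ y, P (P y) = P y) {n : ℕ}
    (ht : LinearMap.trace ℝ Crd P = n) : Module.finrank ℝ (LinearMap.range P) = n := by
  have hi : IsIdempotentElem P := LinearMap.ext h
  have := (LinearMap.IsIdempotentElem.isProj_range P hi).trace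
  rw [ht] at this
  exact_mod_cast this.symm

lemma rank1 : Module.finrank ℝ (LinearMap.range P1) = 1 :=
  finrank_range_of P1_P1 (by rw [trace_P1]; norm_num)

lemma rank7 : Module.finrank ℝ (LinearMap.range P7) = 7 :=
  finrank_range_of P7_P7 (by rw [trace_P7]; norm_num)

lemma rank27 : Module.finrank ℝ (LinearMap.range P27) = 27 := by
  apply finrank_range_of
  · intro y
    simp only [P27_apply, map_add, map_sub, map_smul, P1_P1, P1_P7, P7_P1, P7_P7, Cs_P1,
      Cs_P7, P1_Cs, P7_Cs, Cs_Cs]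
    module
  · rw [P27, map_sub, map_sub, map_smul, map_add, trace_id70, trace_Cs, trace_P1, trace_P7]
    norm_num

lemma rank35 : Module.finrank ℝ (LinearMap.range P35) = 35 := by
  apply finrank_range_of
  · intro y
    simp only [P35_apply, map_sub, map_smul, Cs_Cs]
    module
  · rw [P35, map_smul, map_sub, trace_id70, trace_Cs]
    norm_num

lemma finrank_map_toForm (p : Submodule ℝ Crd) :
    Module.finrank ℝ (p.map toForm) = Module.finrank ℝ p :=
  (Submodule.equivMapOfInjective toForm toForm_injective p).finrank_eq.symm

/-- Transport of eigenspaces. -/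
lemma eig_transport (A : (Fin 8 → Fin 8 → Fin 8 → Fin 8 → ℝ) →ₗ[ℝ]
    (Fin 8 → Fin 8 → Fin 8 → Fin 8 → ℝ)) (B : Crd →ₗ[ℝ] Crd)
    (h : ∀ y, A (toForm y) = toForm (B y)) (r : ℝ) :
    FourForm ⊓ Module.End.eigenspace A r = (Module.End.eigenspace B r).map toForm := by
  ext s
  simp only [Submodule.mem_inf, Submodule.mem_map, Module.End.mem_eigenspace_iff]
  constructor
  · rintro ⟨h1, h2⟩
    obtain ⟨y, rfl⟩ := toForm_surj h1
    refine ⟨y, ?_, rfl⟩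
    rw [h, ← map_smul] at h2
    exact toForm_injective h2
  · rintro ⟨y, hy, rfl⟩
    refine ⟨toForm_mem y, ?_⟩
    rw [h, hy, map_smul]

lemma L1_eq : Lambda4_1 = (LinearMap.range P1).map toForm := by
  rw [Lambda4_1, eig_transport _ _ Omega_f, eig1]

lemma L7_eq : Lambda4_7 = (LinearMap.range P7).map toForm := by
  rw [Lambda4_7, eig_transport _ _ Omega_f, eig7]

lemma L27_eq : Lambda4_27 = (LinearMap.range P27).map toForm := by
  rw [Lambda4_27, eig_transport _ _ Omega_f, eig27]

lemma L35_eq : Lambda4_35 = (LinearMap.range P35).map toForm := by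
  rw [Lambda4_35, eig_transport _ _ Omega_f, eig35]

lemma poly_zero (y : Crd) : toForm (Tc (Tc (Tc (Tc y) - (4 : ℝ) • Tc y) + (12 : ℝ) •
    (Tc (Tc y) - (4 : ℝ) • Tc y)) + (24 : ℝ) • (Tc (Tc (Tc y) - (4 : ℝ) • Tc y) + (12 : ℝ) •
    (Tc (Tc y) - (4 : ℝ) • Tc y))) = 0 := by
  have h1 : Tc (Tc y) - (4 : ℝ) • Tc y = (672 : ℝ) • P1 y + (192 : ℝ) • P7 y := by
    simp only [Tc_apply, map_add, map_sub, map_smul, P1_P1, P1_P7, P7_P1, P7_P7, Cs_P1,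
      Cs_P7, P1_Cs, P7_Cs, Cs_Cs]
    module
  rw [h1]
  rw [← map_zero toForm]
  congr 1
  simp only [Tc_apply, map_add, map_sub, map_smul, map_zero, P1_P1, P1_P7, P7_P1, P7_P7, Cs_P1,
    Cs_P7]
  module

/-- `Ω_Φ` is diagonalizable on the 70-dimensional space of 4-forms with eigenvalues
`-24, -12, 4, 0`, eigenspaces of dimensions `1, 7, 27, 35`; the self-dual 4-forms are
`Λ⁴₁ ⊕ Λ⁴₇ ⊕ Λ⁴₂₇` and the anti-self-dual 4-forms are `Λ⁴₃₅`; in particular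
`(Ω_Φ + 24)(Ω_Φ + 12)(Ω_Φ - 4)Ω_Φ = 0` on 4-forms. -/
theorem spin7_four_form_decomposition :
    Module.finrank ℝ ↥FourForm = 70 ∧
    Module.finrank ℝ ↥Lambda4_1 = 1 ∧
    Module.finrank ℝ ↥Lambda4_7 = 7 ∧
    Module.finrank ℝ ↥Lambda4_27 = 27 ∧
    Module.finrank ℝ ↥Lambda4_35 = 35 ∧
    Lambda4_1 ⊔ Lambda4_7 ⊔ Lambda4_27 ⊔ Lambda4_35 = FourForm ∧
    SelfDual4 = Lambda4_1 ⊔ Lambda4_7 ⊔ Lambda4_27 ∧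
    AntiSelfDual4 = Lambda4_35 ∧
    ∀ σ, σ ∈ FourForm →
      ((OmegaOp + (24 : ℝ) • LinearMap.id) ∘ₗ (OmegaOp + (12 : ℝ) • LinearMap.id)
        ∘ₗ (OmegaOp - (4 : ℝ) • LinearMap.id) ∘ₗ OmegaOp) σ = 0 := by
  refine ⟨?_, ?_, ?_, ?_, ?_, ?_, ?_, ?_, ?_⟩
  · rw [← range_toForm, LinearMap.finrank_range_of_inj toForm_injective,
      Module.finrank_fintype_fun_eq_card, card_Idx]
  · rw [L1_eq, finrank_map_toForm, rank1]
  · rw [L7_eq, finrank_map_toForm, rank7]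
  · rw [L27_eq, finrank_map_toForm, rank27]
  · rw [L35_eq, finrank_map_toForm, rank35]
  · rw [L1_eq, L7_eq, L27_eq, L35_eq, ← Submodule.map_sup, ← Submodule.map_sup,
      ← Submodule.map_sup, sup_top, Submodule.map_top, range_toForm]
  · rw [L1_eq, L7_eq, L27_eq, ← Submodule.map_sup, ← Submodule.map_sup, SelfDual4,
      eig_transport _ _ hodge_f, eigCp]
  · rw [L35_eq, AntiSelfDual4, eig_transport _ _ hodge_f, eigCm]
  · intro σ hσ
    obtain ⟨y, rfl⟩ := toForm_surj hσ
    have key := poly_zero y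
    simp only [map_add, map_sub, map_smul] at key
    simp only [LinearMap.comp_apply, LinearMap.add_apply, LinearMap.sub_apply,
      LinearMap.smul_apply, LinearMap.id_apply, Omega_f, map_add, map_sub, map_smul]
    rw [← key]
    module
end
end

section
/- If a 4-form σ on ℝ^8 satisfies σ_{jabc}Φ_{iabc} = 0 for all i,j (sum over a,b,c), then σ is self-dual: σ_{ijkl} = (1/24) ε_{ijklabcd} σ_{abcd} for all i,j,k,l. -/
/-!
We work in ℝ⁸ with the standard basis `e₀, …, e₇`.  A `k`-form is a totally antisymmetric
map `(Fin 8)^k → ℝ`; repeated indices are summed over `Fin 8` and `kd` is the Kronecker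
delta.  `Phi` is the fundamental 4-form of the standard `Spin(7)`-structure on ℝ⁸,
`Φ = -e₀₁₂₇ + e₀₂₃₆ - e₀₃₄₇ - e₀₅₆₇ + e₀₁₄₆ + e₀₂₄₅ - e₀₁₃₅
     - e₃₄₅₆ - e₁₄₅₇ - e₁₂₅₆ - e₁₂₃₄ - e₂₃₅₇ - e₁₃₆₇ + e₂₄₆₇`.
-/

noncomputable section

/-- Total antisymmetry of a 4-tensor. -/
def IsAlt4 (σ : Fin 8 → Fin 8 → Fin 8 → Fin 8 → ℝ) : Prop :=
  ∀ i j k l, σ i j k l = -σ j i k l ∧ σ i j k l = -σ i k j l ∧ σ i j k l = -σ i j l k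

/-- The value of `σ_{jabc} (e_p ∧ e_q ∧ e_r ∧ e_s)_{iabc}`, up to the factor 6. -/
def contr (σ : Fin 8 → Fin 8 → Fin 8 → Fin 8 → ℝ) (p q r s i j : Fin 8) : ℝ :=
  (if p = i then σ j q r s else 0) - (if q = i then σ j p r s else 0)
    + (if r = i then σ j p q s else 0) - (if s = i then σ j p q r else 0)

lemma sum_kd (F : Fin 8 → Fin 8 → Fin 8 → ℝ) (p q r : Fin 8) :
    ∑ a, ∑ b, ∑ c, F a b c * (kd p a * kd q b * kd r c) = F p q r := by
  simp [kd]

lemma sum_wedge (σ : Fin 8 → Fin 8 → Fin 8 → Fin 8 → ℝ) (hσ : IsAlt4 σ) (p q r s i j : Fin 8) :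
    ∑ a, ∑ b, ∑ c, σ j a b c * wedge4 p q r s i a b c = 6 * contr σ p q r s i j := by
  have e : ∀ a b c, σ j a b c * wedge4 p q r s i a b c =
      kd p i * (σ j a b c * (kd q a * kd r b * kd s c) - σ j a b c * (kd q a * kd s b * kd r c)
        - σ j a b c * (kd r a * kd q b * kd s c) + σ j a b c * (kd r a * kd s b * kd q c)
        + σ j a b c * (kd s a * kd q b * kd r c) - σ j a b c * (kd s a * kd r b * kd q c))
      - kd q i * (σ j a b c * (kd p a * kd r b * kd s c) - σ j a b c * (kd p a * kd s b * kd r c)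
        - σ j a b c * (kd r a * kd p b * kd s c) + σ j a b c * (kd r a * kd s b * kd p c)
        + σ j a b c * (kd s a * kd p b * kd r c) - σ j a b c * (kd s a * kd r b * kd p c))
      + kd r i * (σ j a b c * (kd p a * kd q b * kd s c) - σ j a b c * (kd p a * kd s b * kd q c)
        - σ j a b c * (kd q a * kd p b * kd s c) + σ j a b c * (kd q a * kd s b * kd p c)
        + σ j a b c * (kd s a * kd p b * kd q c) - σ j a b c * (kd s a * kd q b * kd p c))
      - kd s i * (σ j a b c * (kd p a * kd q b * kd r c) - σ j a b c * (kd p a * kd r b * kd q c)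
        - σ j a b c * (kd q a * kd p b * kd r c) + σ j a b c * (kd q a * kd r b * kd p c)
        + σ j a b c * (kd r a * kd p b * kd q c) - σ j a b c * (kd r a * kd q b * kd p c)) := by
    intro a b c
    simp [wedge4, Matrix.det_succ_row_zero, Fin.sum_univ_succ, Fin.succAbove]
    ring
  have perm : ∀ x y z, σ j x y z - σ j x z y - σ j y x z + σ j y z x + σ j z x y - σ j z y x
      = 6 * σ j x y z := by
    intro x y z
    have h1 := (hσ j x y z).2.1
    have h2 := (hσ j x y z).2.2
    have h3 := (hσ j y x z).2.2
    have h4 := (hσ j x z y).2.1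
    have h5 := (hσ j z y x).2.2
    linarith
  simp only [e, Finset.sum_add_distrib, Finset.sum_sub_distrib, ← Finset.mul_sum, sum_kd, perm]
  simp only [contr, kd, ite_mul, one_mul, zero_mul]
  split_ifs <;> ring

lemma anti_diag (σ : Fin 8 → Fin 8 → Fin 8 → Fin 8 → ℝ) (hσ : IsAlt4 σ) (i k l : Fin 8) :
    σ i i k l = 0 ∧ σ k i i l = 0 ∧ σ k l i i = 0 := by
  have h1 := (hσ i i k l).1
  have h2 := (hσ k i i l).2.1
  have h3 := (hσ k l i i).2.2
  refine ⟨?_, ?_, ?_⟩ <;> linarith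

lemma anti_sort1 (σ : Fin 8 → Fin 8 → Fin 8 → Fin 8 → ℝ) (hσ : IsAlt4 σ) (i j k l : Fin 8)
    (_ : j < i) : σ i j k l = - σ j i k l := (hσ i j k l).1

lemma anti_sort2 (σ : Fin 8 → Fin 8 → Fin 8 → Fin 8 → ℝ) (hσ : IsAlt4 σ) (i j k l : Fin 8)
    (_ : k < j) : σ i j k l = - σ i k j l := (hσ i j k l).2.1

lemma anti_sort3 (σ : Fin 8 → Fin 8 → Fin 8 → Fin 8 → ℝ) (hσ : IsAlt4 σ) (i j k l : Fin 8)
    (_ : l < k) : σ i j k l = - σ i j l k := (hσ i j k l).2.2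

/-- A 4-form vanishing on increasing indices vanishes. -/
lemma alt_zero (T : Fin 8 → Fin 8 → Fin 8 → Fin 8 → ℝ) (hT : IsAlt4 T)
    (h0 : ∀ i j k l, i < j → j < k → k < l → T i j k l = 0) (i j k l : Fin 8) :
    T i j k l = 0 := by
  have s1 : ∀ i j k l, T j i k l = 0 → T i j k l = 0 := fun i j k l h => by
    rw [(hT i j k l).1, h, neg_zero]
  have s2 : ∀ i j k l, T i k j l = 0 → T i j k l = 0 := fun i j k l h => by
    rw [(hT i j k l).2.1, h, neg_zero]
  have s3 : ∀ i j k l, T i j l k = 0 → T i j k l = 0 := fun i j k l h => by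
    rw [(hT i j k l).2.2, h, neg_zero]
  -- insert the indices one at a time
  have a1 : ∀ i j k l, j < k → k < l → T i j k l = 0 := by
    intro i j k l h1 h2
    rcases lt_trichotomy i j with h | rfl | h
    · exact h0 _ _ _ _ h h1 h2
    · exact (anti_diag T hT _ _ _).1
    apply s1
    rcases lt_trichotomy i k with h' | rfl | h'
    · exact h0 _ _ _ _ h h' h2
    · exact (anti_diag T hT _ _ _).2.1
    apply s2
    rcases lt_trichotomy i l with h'' | rfl | h''
    · exact h0 _ _ _ _ h1 h' h''
    · exact (anti_diag T hT _ _ _).2.2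
    exact s3 _ _ _ _ (h0 _ _ _ _ h1 h2 h'')
  have a2 : ∀ i j k l, k < l → T i j k l = 0 := by
    intro i j k l h2
    rcases lt_trichotomy j k with h | rfl | h
    · exact a1 _ _ _ _ h h2
    · exact (anti_diag T hT _ _ _).2.1
    apply s2
    rcases lt_trichotomy j l with h' | rfl | h'
    · exact a1 _ _ _ _ h h'
    · exact (anti_diag T hT _ _ _).2.2
    exact s3 _ _ _ _ (a1 _ _ _ _ h2 h')
  rcases lt_trichotomy k l with h | rfl | h
  · exact a2 _ _ _ _ h
  · exact (anti_diag T hT _ _ _).2.2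
  · exact s3 _ _ _ _ (a2 _ _ _ _ h)

/-- Integer-valued inversion-count formula for the Levi-Civita symbol. -/
def inv8 (f : Fin 8 → Fin 8) : ℤ :=
  ∏ j, ∏ i ∈ Finset.Iio j, if f i < f j then 1 else -1

lemma eps8_eq_inv8 (f : Fin 8 → Fin 8) (hf : Function.Bijective f) : eps8 f = (inv8 f : ℝ) := by
  rw [eps8, dif_pos hf, Equiv.Perm.sign_eq_prod_prod_Iio]
  simp [inv8, apply_ite]

lemma eps8_zero (f : Fin 8 → Fin 8) (a b : Fin 8) (hab : a ≠ b) (h : f a = f b) : eps8 f = 0 :=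
  dif_neg fun hf => hab (hf.1 h)

lemma eps8_swap (f : Fin 8 → Fin 8) (a b : Fin 8) (hab : a ≠ b) :
    eps8 f = - eps8 (f ∘ Equiv.swap a b) := by
  by_cases hf : Function.Bijective f
  · have hg : Function.Bijective (f ∘ Equiv.swap a b) := hf.comp (Equiv.swap a b).bijective
    rw [eps8, eps8, dif_pos hf, dif_pos hg]
    have : Equiv.ofBijective _ hg = Equiv.ofBijective f hf * Equiv.swap a b := by
      ext x; rfl
    rw [this, Equiv.Perm.sign_mul, Equiv.Perm.sign_swap hab]
    simp
  · have hg : ¬ Function.Bijective (f ∘ Equiv.swap a b) := fun h => hf (by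
      have := h.comp (Equiv.swap a b).bijective
      rwa [Function.comp_assoc, ← Equiv.coe_trans, Equiv.swap_swap] at this)
    rw [eps8, eps8, dif_neg hf, dif_neg hg, neg_zero]

lemma eps8_anti (a b c d e f g h : Fin 8) :
    eps8 ![a, b, c, d, e, f, g, h] = - eps8 ![b, a, c, d, e, f, g, h] ∧
    eps8 ![a, b, c, d, e, f, g, h] = - eps8 ![a, c, b, d, e, f, g, h] ∧
    eps8 ![a, b, c, d, e, f, g, h] = - eps8 ![a, b, d, c, e, f, g, h] ∧
    eps8 ![a, b, c, d, e, f, g, h] = - eps8 ![a, b, c, d, f, e, g, h] ∧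
    eps8 ![a, b, c, d, e, f, g, h] = - eps8 ![a, b, c, d, e, g, f, h] ∧
    eps8 ![a, b, c, d, e, f, g, h] = - eps8 ![a, b, c, d, e, f, h, g] := by
  refine ⟨?_, ?_, ?_, ?_, ?_, ?_⟩
  · rw [eps8_swap _ 0 1 (by decide)]; congr 2; funext x; fin_cases x <;> rfl
  · rw [eps8_swap _ 1 2 (by decide)]; congr 2; funext x; fin_cases x <;> rfl
  · rw [eps8_swap _ 2 3 (by decide)]; congr 2; funext x; fin_cases x <;> rfl
  · rw [eps8_swap _ 4 5 (by decide)]; congr 2; funext x; fin_cases x <;> rfl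
  · rw [eps8_swap _ 5 6 (by decide)]; congr 2; funext x; fin_cases x <;> rfl
  · rw [eps8_swap _ 6 7 (by decide)]; congr 2; funext x; fin_cases x <;> rfl

/-- A symmetric array supported on the permutations of `p, q, r, s` sums to 24 times its value. -/
lemma sum_sym (S : Fin 8 → Fin 8 → Fin 8 → Fin 8 → ℝ) (i j k l p q r s : Fin 8)
    (hf : Function.Bijective ![i, j, k, l, p, q, r, s])
    (h1 : ∀ a b c d, S a b c d = S b a c d) (h2 : ∀ a b c d, S a b c d = S a c b d)
    (h3 : ∀ a b c d, S a b c d = S a b d c)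
    (hi : ∀ b c d, S i b c d = 0) (hj : ∀ b c d, S j b c d = 0)
    (hk : ∀ b c d, S k b c d = 0) (hl : ∀ b c d, S l b c d = 0)
    (hd : ∀ a c d, S a a c d = 0) :
    ∑ a, ∑ b, ∑ c, ∑ d, S a b c d = 24 * S p q r s := by
  have expand : ∀ F : Fin 8 → ℝ, F i = 0 → F j = 0 → F k = 0 → F l = 0 →
      ∑ a, F a = F p + F q + F r + F s := by
    intro F e1 e2 e3 e4
    rw [← hf.sum_comp F, Fin.sum_univ_eight]
    simp [e1, e2, e3, e4]
  have b0 : ∀ x, (∀ b c d, S x b c d = 0) → ∀ a c d, S a x c d = 0 := fun x h a c d => by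
    rw [h1, h]
  have c0 : ∀ x, (∀ b c d, S x b c d = 0) → ∀ a c d, S a c x d = 0 := fun x h a c d => by
    rw [h2, b0 x h]
  have d0 : ∀ x, (∀ b c d, S x b c d = 0) → ∀ a c d, S a c d x = 0 := fun x h a c d => by
    rw [h3, c0 x h]
  have g1 : ∀ a b d, S a b a d = 0 := fun a b d => by rw [h2, hd]
  have g2 : ∀ a b c, S a b c a = 0 := fun a b c => by rw [h3, g1]
  have g3 : ∀ a b d, S a b b d = 0 := fun a b d => by rw [h1, g1]
  have g4 : ∀ a b c, S a b c b = 0 := fun a b c => by rw [h3, g3]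
  have g5 : ∀ a b c, S a b c c = 0 := fun a b c => by rw [h2, g4]
  have ed : ∀ a b c, ∑ d, S a b c d = S a b c p + S a b c q + S a b c r + S a b c s :=
    fun a b c => expand _ (d0 i hi _ _ _) (d0 j hj _ _ _) (d0 k hk _ _ _) (d0 l hl _ _ _)
  simp only [ed]
  rw [expand _ (by simp [hi]) (by simp [hj]) (by simp [hk]) (by simp [hl])]
  have eb : ∀ a, ∑ b, ∑ c, (S a b c p + S a b c q + S a b c r + S a b c s) =
      ∑ c, (S a p c p + S a p c q + S a p c r + S a p c s) +
      ∑ c, (S a q c p + S a q c q + S a q c r + S a q c s) +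
      ∑ c, (S a r c p + S a r c q + S a r c r + S a r c s) +
      ∑ c, (S a s c p + S a s c q + S a s c r + S a s c s) := fun a =>
    expand _ (by simp [b0 i hi]) (by simp [b0 j hj]) (by simp [b0 k hk]) (by simp [b0 l hl])
  have ec : ∀ a b, ∑ c, (S a b c p + S a b c q + S a b c r + S a b c s) =
      (S a b p p + S a b p q + S a b p r + S a b p s) +
      (S a b q p + S a b q q + S a b q r + S a b q s) +
      (S a b r p + S a b r q + S a b r r + S a b r s) +
      (S a b s p + S a b s q + S a b s r + S a b s s) := fun a b =>
    expand _ (by simp [c0 i hi]) (by simp [c0 j hj]) (by simp [c0 k hk]) (by simp [c0 l hl])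
  simp only [eb]
  simp only [ec]
  simp only [hd, g1, g2, g3, g4, g5]
  have t1 : ∀ a b c d, S a b d c = S a b c d := fun a b c d => h3 a b d c
  have t2 : ∀ a b c d, S a c b d = S a b c d := fun a b c d => h2 a c b d
  have t3 : ∀ a b c d, S a c d b = S a b c d := fun a b c d => by rw [t1, t2]
  have t4 : ∀ a b c d, S a d b c = S a b c d := fun a b c d => by rw [t2, t1]
  have t5 : ∀ a b c d, S a d c b = S a b c d := fun a b c d => by rw [t1, t4]
  have u1 : ∀ a b c d, S b a c d = S a b c d := fun a b c d => h1 b a c d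
  have u2 : ∀ a b c d, S c a b d = S a b c d := fun a b c d => by rw [u1, t2]
  have u3 : ∀ a b c d, S d a b c = S a b c d := fun a b c d => by rw [u1, t4]
  rw [t1 p q r s, t2 p q r s, t3 p q r s, t4 p q r s, t5 p q r s,
    t1 q p r s, t2 q p r s, t3 q p r s, t4 q p r s, t5 q p r s,
    t1 r p q s, t2 r p q s, t3 r p q s, t4 r p q s, t5 r p q s,
    t1 s p q r, t2 s p q r, t3 s p q r, t4 s p q r, t5 s p q r,
    u1 p q r s, u2 p q r s, u3 p q r s]
  ring

/-- The self-duality equation at a given index tuple. -/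
def SD (σ : Fin 8 → Fin 8 → Fin 8 → Fin 8 → ℝ) (i j k l : Fin 8) : Prop :=
  σ i j k l = (1/24) * ∑ a, ∑ b, ∑ c, ∑ d, eps8 ![i, j, k, l, a, b, c, d] * σ a b c d

lemma hodge_eval (σ : Fin 8 → Fin 8 → Fin 8 → Fin 8 → ℝ) (hσ : IsAlt4 σ)
    (i j k l p q r s : Fin 8) (hf : Function.Bijective ![i, j, k, l, p, q, r, s]) :
    ∑ a, ∑ b, ∑ c, ∑ d, eps8 ![i, j, k, l, a, b, c, d] * σ a b c d
      = 24 * ((inv8 ![i, j, k, l, p, q, r, s] : ℝ) * σ p q r s) := by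
  rw [← eps8_eq_inv8 _ hf]
  apply sum_sym (fun a b c d => eps8 ![i, j, k, l, a, b, c, d] * σ a b c d) i j k l p q r s hf
  · intro a b c d
    rw [(eps8_anti i j k l a b c d).2.2.2.1, (hσ a b c d).1]; ring
  · intro a b c d
    rw [(eps8_anti i j k l a b c d).2.2.2.2.1, (hσ a b c d).2.1]; ring
  · intro a b c d
    rw [(eps8_anti i j k l a b c d).2.2.2.2.2, (hσ a b c d).2.2]; ring
  · intro b c d
    rw [eps8_zero _ 0 4 (by decide) rfl, zero_mul]
  · intro b c d
    rw [eps8_zero _ 1 4 (by decide) rfl, zero_mul]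
  · intro b c d
    rw [eps8_zero _ 2 4 (by decide) rfl, zero_mul]
  · intro b c d
    rw [eps8_zero _ 3 4 (by decide) rfl, zero_mul]
  · intro b c d
    rw [eps8_zero _ 4 5 (by decide) rfl, zero_mul]

lemma selfDual_pair (σ : Fin 8 → Fin 8 → Fin 8 → Fin 8 → ℝ) (hσ : IsAlt4 σ)
    (i j k l p q r s : Fin 8) (hf : Function.Injective ![i, j, k, l, p, q, r, s])
    (e : ℤ) (he : inv8 ![i, j, k, l, p, q, r, s] = e ∧ inv8 ![p, q, r, s, i, j, k, l] = e)
    (hee : e * e = 1) (h : σ i j k l = (e : ℝ) * σ p q r s) :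
    SD σ i j k l ∧ SD σ p q r s := by
  have hb := Finite.injective_iff_bijective.mp hf
  have hf' : Function.Injective ![p, q, r, s, i, j, k, l] := by
    have h' : Function.Injective (![i, j, k, l, p, q, r, s] ∘ fun x : Fin 8 => x + 4) :=
      hf.comp (add_left_injective 4)
    convert h' using 1
    funext x; fin_cases x <;> rfl
  have hb' := Finite.injective_iff_bijective.mp hf'
  have hR : (e : ℝ) * e = 1 := by exact_mod_cast hee
  constructor
  · rw [SD, hodge_eval σ hσ i j k l p q r s hb, he.1, h]; ring
  · rw [SD, hodge_eval σ hσ p q r s i j k l hb', he.2, h, ← mul_assoc (e : ℝ), hR]; ring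

lemma SD_of_sorted (σ : Fin 8 → Fin 8 → Fin 8 → Fin 8 → ℝ) (hσ : IsAlt4 σ)
    (h : ∀ i j k l, i < j → j < k → k < l → SD σ i j k l) (i j k l : Fin 8) : SD σ i j k l := by
  have := alt_zero (fun i j k l => σ i j k l -
    (1/24) * ∑ a, ∑ b, ∑ c, ∑ d, eps8 ![i, j, k, l, a, b, c, d] * σ a b c d) ?_ ?_ i j k l
  · exact sub_eq_zero.mp this
  · intro i j k l
    simp only
    refine ⟨?_, ?_, ?_⟩
    · rw [(hσ i j k l).1]
      simp only [(eps8_anti i j k l _ _ _ _).1, neg_mul, Finset.sum_neg_distrib]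
      ring
    · rw [(hσ i j k l).2.1]
      simp only [(eps8_anti i j k l _ _ _ _).2.1, neg_mul, Finset.sum_neg_distrib]
      ring
    · rw [(hσ i j k l).2.2]
      simp only [(eps8_anti i j k l _ _ _ _).2.2.1, neg_mul, Finset.sum_neg_distrib]
      ring
  · intro i j k l h1 h2 h3
    exact sub_eq_zero.mpr (h i j k l h1 h2 h3)

lemma trace_eval (σ : Fin 8 → Fin 8 → Fin 8 → Fin 8 → ℝ) (hσ : IsAlt4 σ) (i j : Fin 8)
    (h : (∑ a, ∑ b, ∑ c, σ j a b c * Phi i a b c) = 0) :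
    -contr σ 0 1 2 7 i j + contr σ 0 2 3 6 i j - contr σ 0 3 4 7 i j
      - contr σ 0 5 6 7 i j + contr σ 0 1 4 6 i j + contr σ 0 2 4 5 i j
      - contr σ 0 1 3 5 i j - contr σ 3 4 5 6 i j - contr σ 1 4 5 7 i j
      - contr σ 1 2 5 6 i j - contr σ 1 2 3 4 i j - contr σ 2 3 5 7 i j
      - contr σ 1 3 6 7 i j + contr σ 2 4 6 7 i j = 0 := by
  simp only [Phi, mul_add, mul_sub, mul_neg, Finset.sum_add_distrib, Finset.sum_sub_distrib,
    Finset.sum_neg_distrib, sum_wedge σ hσ] at h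
  linarith

set_option maxHeartbeats 4000000

/-- Every increasing quadruple, or its complement, starts with `0`; this lists all of them. -/
lemma sorted_cases (P : Fin 8 → Fin 8 → Fin 8 → Fin 8 → Prop)
    (d0123 : P 0 1 2 3 ∧ P 4 5 6 7)
    (d0124 : P 0 1 2 4 ∧ P 3 5 6 7)
    (d0125 : P 0 1 2 5 ∧ P 3 4 6 7)
    (d0126 : P 0 1 2 6 ∧ P 3 4 5 7)
    (d0127 : P 0 1 2 7 ∧ P 3 4 5 6)
    (d0134 : P 0 1 3 4 ∧ P 2 5 6 7)
    (d0135 : P 0 1 3 5 ∧ P 2 4 6 7)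
    (d0136 : P 0 1 3 6 ∧ P 2 4 5 7)
    (d0137 : P 0 1 3 7 ∧ P 2 4 5 6)
    (d0145 : P 0 1 4 5 ∧ P 2 3 6 7)
    (d0146 : P 0 1 4 6 ∧ P 2 3 5 7)
    (d0147 : P 0 1 4 7 ∧ P 2 3 5 6)
    (d0156 : P 0 1 5 6 ∧ P 2 3 4 7)
    (d0157 : P 0 1 5 7 ∧ P 2 3 4 6)
    (d0167 : P 0 1 6 7 ∧ P 2 3 4 5)
    (d0234 : P 0 2 3 4 ∧ P 1 5 6 7)
    (d0235 : P 0 2 3 5 ∧ P 1 4 6 7)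
    (d0236 : P 0 2 3 6 ∧ P 1 4 5 7)
    (d0237 : P 0 2 3 7 ∧ P 1 4 5 6)
    (d0245 : P 0 2 4 5 ∧ P 1 3 6 7)
    (d0246 : P 0 2 4 6 ∧ P 1 3 5 7)
    (d0247 : P 0 2 4 7 ∧ P 1 3 5 6)
    (d0256 : P 0 2 5 6 ∧ P 1 3 4 7)
    (d0257 : P 0 2 5 7 ∧ P 1 3 4 6)
    (d0267 : P 0 2 6 7 ∧ P 1 3 4 5)
    (d0345 : P 0 3 4 5 ∧ P 1 2 6 7)
    (d0346 : P 0 3 4 6 ∧ P 1 2 5 7)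
    (d0347 : P 0 3 4 7 ∧ P 1 2 5 6)
    (d0356 : P 0 3 5 6 ∧ P 1 2 4 7)
    (d0357 : P 0 3 5 7 ∧ P 1 2 4 6)
    (d0367 : P 0 3 6 7 ∧ P 1 2 4 5)
    (d0456 : P 0 4 5 6 ∧ P 1 2 3 7)
    (d0457 : P 0 4 5 7 ∧ P 1 2 3 6)
    (d0467 : P 0 4 6 7 ∧ P 1 2 3 5)
    (d0567 : P 0 5 6 7 ∧ P 1 2 3 4)
    (i j k l : Fin 8) (hij : i < j) (hjk : j < k) (hkl : k < l) : P i j k l := by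
  fin_cases i <;> fin_cases j <;> first | exact absurd hij (by decide) | skip
  all_goals fin_cases k <;> first | exact absurd hjk (by decide) | skip
  all_goals fin_cases l <;> first | exact absurd hkl (by decide) | skip
  all_goals simp_all


/-- If a 4-form `σ` satisfies `σ_{jabc}Φ_{iabc} = 0` for all `i,j`, then `σ` is self-dual. -/
theorem spin7_traceless_four_form_self_dual :
    ∀ σ : Fin 8 → Fin 8 → Fin 8 → Fin 8 → ℝ,
      (∀ i j k l, σ i j k l = -σ j i k l ∧ σ i j k l = -σ i k j l ∧ σ i j k l = -σ i j l k) →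
      (∀ i j, (∑ a, ∑ b, ∑ c, σ j a b c * Phi i a b c) = 0) →
      ∀ i j k l, σ i j k l =
        (1/24) * ∑ a, ∑ b, ∑ c, ∑ d, eps8 ![i, j, k, l, a, b, c, d] * σ a b c d := by
  intro σ hσ' hc
  have hσ : IsAlt4 σ := hσ'
  have H := fun i j => trace_eval σ hσ i j (hc i j)
  have h04 := H 0 4
  have h40 := H 4 0
  have h16 := H 1 6
  have h61 := H 6 1
  have h25 := H 2 5
  have h52 := H 5 2
  have h37 := H 3 7
  have h73 := H 7 3
  simp [contr, anti_diag σ hσ, anti_sort1 σ hσ, anti_sort2 σ hσ, anti_sort3 σ hσ] at h04 h40 h16 h61 h25 h52 h37 h73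
  have d0123 := selfDual_pair σ hσ 0 1 2 3 4 5 6 7 (by decide) (1) (by decide) (by decide) (by push_cast; linarith)
  have d0157 := selfDual_pair σ hσ 0 1 5 7 2 3 4 6 (by decide) (-1) (by decide) (by decide) (by push_cast; linarith)
  have d0267 := selfDual_pair σ hσ 0 2 6 7 1 3 4 5 (by decide) (-1) (by decide) (by decide) (by push_cast; linarith)
  have d0356 := selfDual_pair σ hσ 0 3 5 6 1 2 4 7 (by decide) (1) (by decide) (by decide) (by push_cast; linarith)
  clear h04 h40 h16 h61 h25 h52 h37 h73
  have h03 := H 0 3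
  have h30 := H 3 0
  have h15 := H 1 5
  have h51 := H 5 1
  have h26 := H 2 6
  have h62 := H 6 2
  have h47 := H 4 7
  have h74 := H 7 4
  simp [contr, anti_diag σ hσ, anti_sort1 σ hσ, anti_sort2 σ hσ, anti_sort3 σ hσ] at h03 h30 h15 h51 h26 h62 h47 h74
  have d0124 := selfDual_pair σ hσ 0 1 2 4 3 5 6 7 (by decide) (-1) (by decide) (by decide) (by push_cast; linarith)
  have d0167 := selfDual_pair σ hσ 0 1 6 7 2 3 4 5 (by decide) (1) (by decide) (by decide) (by push_cast; linarith)
  have d0257 := selfDual_pair σ hσ 0 2 5 7 1 3 4 6 (by decide) (1) (by decide) (by decide) (by push_cast; linarith)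
  have d0456 := selfDual_pair σ hσ 0 4 5 6 1 2 3 7 (by decide) (-1) (by decide) (by decide) (by push_cast; linarith)
  clear h03 h30 h15 h51 h26 h62 h47 h74
  have h06 := H 0 6
  have h60 := H 6 0
  have h14 := H 1 4
  have h41 := H 4 1
  have h23 := H 2 3
  have h32 := H 3 2
  have h57 := H 5 7
  have h75 := H 7 5
  simp [contr, anti_diag σ hσ, anti_sort1 σ hσ, anti_sort2 σ hσ, anti_sort3 σ hσ] at h06 h60 h14 h41 h23 h32 h57 h75
  have d0125 := selfDual_pair σ hσ 0 1 2 5 3 4 6 7 (by decide) (1) (by decide) (by decide) (by push_cast; linarith)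
  have d0137 := selfDual_pair σ hσ 0 1 3 7 2 4 5 6 (by decide) (-1) (by decide) (by decide) (by push_cast; linarith)
  have d0247 := selfDual_pair σ hσ 0 2 4 7 1 3 5 6 (by decide) (-1) (by decide) (by decide) (by push_cast; linarith)
  have d0345 := selfDual_pair σ hσ 0 3 4 5 1 2 6 7 (by decide) (1) (by decide) (by decide) (by push_cast; linarith)
  clear h06 h60 h14 h41 h23 h32 h57 h75
  have h05 := H 0 5
  have h50 := H 5 0
  have h13 := H 1 3
  have h31 := H 3 1
  have h24 := H 2 4
  have h42 := H 4 2
  have h67 := H 6 7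
  have h76 := H 7 6
  simp [contr, anti_diag σ hσ, anti_sort1 σ hσ, anti_sort2 σ hσ, anti_sort3 σ hσ] at h05 h50 h13 h31 h24 h42 h67 h76
  have d0126 := selfDual_pair σ hσ 0 1 2 6 3 4 5 7 (by decide) (-1) (by decide) (by decide) (by push_cast; linarith)
  have d0147 := selfDual_pair σ hσ 0 1 4 7 2 3 5 6 (by decide) (1) (by decide) (by decide) (by push_cast; linarith)
  have d0237 := selfDual_pair σ hσ 0 2 3 7 1 4 5 6 (by decide) (1) (by decide) (by decide) (by push_cast; linarith)
  have d0346 := selfDual_pair σ hσ 0 3 4 6 1 2 5 7 (by decide) (-1) (by decide) (by decide) (by push_cast; linarith)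
  clear h05 h50 h13 h31 h24 h42 h67 h76
  have h00 := H 0 0
  have h11 := H 1 1
  have h22 := H 2 2
  have h33 := H 3 3
  have h44 := H 4 4
  have h55 := H 5 5
  have h66 := H 6 6
  have h77 := H 7 7
  simp [contr, anti_diag σ hσ, anti_sort1 σ hσ, anti_sort2 σ hσ, anti_sort3 σ hσ] at h00 h11 h22 h33 h44 h55 h66 h77
  have d0127 := selfDual_pair σ hσ 0 1 2 7 3 4 5 6 (by decide) (1) (by decide) (by decide) (by push_cast; linarith)
  have d0135 := selfDual_pair σ hσ 0 1 3 5 2 4 6 7 (by decide) (-1) (by decide) (by decide) (by push_cast; linarith)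
  have d0146 := selfDual_pair σ hσ 0 1 4 6 2 3 5 7 (by decide) (-1) (by decide) (by decide) (by push_cast; linarith)
  have d0236 := selfDual_pair σ hσ 0 2 3 6 1 4 5 7 (by decide) (-1) (by decide) (by decide) (by push_cast; linarith)
  have d0245 := selfDual_pair σ hσ 0 2 4 5 1 3 6 7 (by decide) (-1) (by decide) (by decide) (by push_cast; linarith)
  have d0347 := selfDual_pair σ hσ 0 3 4 7 1 2 5 6 (by decide) (1) (by decide) (by decide) (by push_cast; linarith)
  have d0567 := selfDual_pair σ hσ 0 5 6 7 1 2 3 4 (by decide) (1) (by decide) (by decide) (by push_cast; linarith)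
  clear h00 h11 h22 h33 h44 h55 h66 h77
  have h02 := H 0 2
  have h20 := H 2 0
  have h17 := H 1 7
  have h71 := H 7 1
  have h36 := H 3 6
  have h63 := H 6 3
  have h45 := H 4 5
  have h54 := H 5 4
  simp [contr, anti_diag σ hσ, anti_sort1 σ hσ, anti_sort2 σ hσ, anti_sort3 σ hσ] at h02 h20 h17 h71 h36 h63 h45 h54
  have d0134 := selfDual_pair σ hσ 0 1 3 4 2 5 6 7 (by decide) (1) (by decide) (by decide) (by push_cast; linarith)
  have d0156 := selfDual_pair σ hσ 0 1 5 6 2 3 4 7 (by decide) (1) (by decide) (by decide) (by push_cast; linarith)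
  have d0357 := selfDual_pair σ hσ 0 3 5 7 1 2 4 6 (by decide) (-1) (by decide) (by decide) (by push_cast; linarith)
  have d0467 := selfDual_pair σ hσ 0 4 6 7 1 2 3 5 (by decide) (-1) (by decide) (by decide) (by push_cast; linarith)
  clear h02 h20 h17 h71 h36 h63 h45 h54
  have h07 := H 0 7
  have h70 := H 7 0
  have h12 := H 1 2
  have h21 := H 2 1
  have h34 := H 3 4
  have h43 := H 4 3
  have h56 := H 5 6
  have h65 := H 6 5
  simp [contr, anti_diag σ hσ, anti_sort1 σ hσ, anti_sort2 σ hσ, anti_sort3 σ hσ] at h07 h70 h12 h21 h34 h43 h56 h65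
  have d0136 := selfDual_pair σ hσ 0 1 3 6 2 4 5 7 (by decide) (1) (by decide) (by decide) (by push_cast; linarith)
  have d0145 := selfDual_pair σ hσ 0 1 4 5 2 3 6 7 (by decide) (1) (by decide) (by decide) (by push_cast; linarith)
  have d0235 := selfDual_pair σ hσ 0 2 3 5 1 4 6 7 (by decide) (1) (by decide) (by decide) (by push_cast; linarith)
  have d0246 := selfDual_pair σ hσ 0 2 4 6 1 3 5 7 (by decide) (1) (by decide) (by decide) (by push_cast; linarith)
  clear h07 h70 h12 h21 h34 h43 h56 h65
  have h01 := H 0 1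
  have h10 := H 1 0
  have h27 := H 2 7
  have h72 := H 7 2
  have h35 := H 3 5
  have h53 := H 5 3
  have h46 := H 4 6
  have h64 := H 6 4
  simp [contr, anti_diag σ hσ, anti_sort1 σ hσ, anti_sort2 σ hσ, anti_sort3 σ hσ] at h01 h10 h27 h72 h35 h53 h46 h64
  have d0234 := selfDual_pair σ hσ 0 2 3 4 1 5 6 7 (by decide) (-1) (by decide) (by decide) (by push_cast; linarith)
  have d0256 := selfDual_pair σ hσ 0 2 5 6 1 3 4 7 (by decide) (-1) (by decide) (by decide) (by push_cast; linarith)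
  have d0367 := selfDual_pair σ hσ 0 3 6 7 1 2 4 5 (by decide) (1) (by decide) (by decide) (by push_cast; linarith)
  have d0457 := selfDual_pair σ hσ 0 4 5 7 1 2 3 6 (by decide) (1) (by decide) (by decide) (by push_cast; linarith)
  clear h01 h10 h27 h72 h35 h53 h46 h64
  exact SD_of_sorted σ hσ (sorted_cases (SD σ)
    d0123 d0124 d0125 d0126 d0127 d0134 d0135
    d0136 d0137 d0145 d0146 d0147 d0156 d0157
    d0167 d0234 d0235 d0236 d0237 d0245 d0246
    d0247 d0256 d0257 d0267 d0345 d0346 d0347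
    d0356 d0357 d0367 d0456 d0457 d0467 d0567)
end
end
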